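/- arXiv:1001.0253 — 2 statements merged into one kernel-verified Lean document; each statement's English description precedes it below -/
import Mathlib

section
/- The nilpotency problem for cellular automata with a spreading state is undecidable: consider codes (n, r, f, θ) where f : (Fin(n+1))^{2r+1} → Fin(n+1) is a local rule of a CA N on the alphabet Fin(n+1) and θ ∈ Fin(n+1), restricted to those codes for which θ is spreading for N (this restriction is a decidable subset of codes). The predicate 'N is nilpotent' on this set of codes is not a computable predicate. -/
/-- The configuration space of a one-dimensional cellular automaton over alphabet `B`. -/
abbrev Config (B : Type*) := ℤ → B

/-- The global map induced by the local rule `f` of radius `r`. -/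
def caMap {B : Type*} (r : ℕ) (f : (Fin (2 * r + 1) → B) → B) : Config B → Config B :=
  fun x i => f fun j => x (i - (r : ℤ) + ((j : ℕ) : ℤ))

/-- A state `θ` is spreading for the local rule `f` if `f(u) = θ` whenever the
letter `θ` occurs in `u`. -/
def SpreadingRule {B : Type*} {n : ℕ} (f : (Fin n → B) → B) (θ : B) : Prop :=
  ∀ u : Fin n → B, (∃ j, u j = θ) → f u = θ

/-- A map on configurations is nilpotent if some iterated image is a singleton. -/
def Nilpotent {B : Type*} (F : Config B → Config B) : Prop :=
  ∃ (J : ℕ) (c : Config B), Set.range F^[J] = {c}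

/-- A canonical effective encoding of local rules between finite alphabets:
a rule on `m^k` input words is identified with a table indexed by `Fin (m ^ k)`. -/
instance rulePrimcodable (k m : ℕ) : Primcodable ((Fin k → Fin m) → Fin m) :=
  Primcodable.ofEquiv (Fin (m ^ k) → Fin m)
    (Equiv.arrowCongr finFunctionFinEquiv (Equiv.refl (Fin m)))

/-- A code `(n, r, f, θ)` of a cellular automaton on the alphabet `Fin (n+1)` with a
distinguished state: a radius `r`, a local rule `f` and a state `θ`. -/
abbrev NilCode := Σ (n : ℕ) (r : ℕ),
  ((Fin (2 * r + 1) → Fin (n + 1)) → Fin (n + 1)) × Fin (n + 1)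

/-!
Halting of a Turing machine reduces to nilpotency. The cells of the automaton are crossings of
horizontal and vertical signals, and time runs along the antidiagonals: the signals that leave the
crossing `(i, j)` enter the crossings `(i + 1, j)` and `(i, j + 1)`. A crossing at which a local
check fails is in the spreading state, so the automaton is nilpotent iff there are no arbitrarily
large arrays of crossings that pass all checks.

The signals count the lines they cross in base 4, and the checks relate the counters of crossing
lines in such a way that every fourth line belongs to a coarser array of the same kind, whatever
the initial configuration. This forces a hierarchy of lines as in aperiodic tilings. Each level of
the hierarchy splits the plane into zones, and the lines in a zone that avoid all finer zones are
free to carry an array of states that starts afresh in the zone. In this array, column states are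
the space-time diagram of a Turing machine, and halting is a failed check. So arbitrarily large
valid arrays exist iff the machine does not halt.

The input `n` of the machine enters the local rule only as a bound on a counter used to write the
initial tape. Hence the code of the automaton is a primitive recursive function of `n`.
-/

/-! ### Spreading states -/

section Spreading

variable {A B : Type*} {r : ℕ}

namespace SpreadingRule

section Rule

variable {f : (Fin (2 * r + 1) → B) → B} {θ : B}

theorem caMap_eq (hθ : SpreadingRule f θ) {x : Config B} {p q : ℤ} (hq : x q = θ)
    (h : |q - p| ≤ r) : caMap r f x p = θ := by
  rw [abs_le] at h
  refine hθ _ ⟨⟨(q - p + r).toNat, by omega⟩, ?_⟩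
  rw [← hq]
  congr 1
  simp only
  omega

theorem iterate_caMap_eq (hθ : SpreadingRule f θ) {x : Config B} {p q : ℤ} {t d : ℕ}
    (hq : (caMap r f)^[t] x q = θ) (h : |q - p| ≤ d * r) : (caMap r f)^[t + d] x p = θ := by
  induction d generalizing p with
  | zero =>
    obtain rfl : q = p := by simpa [sub_eq_zero] using h
    exact hq
  | succ d ih =>
    rw [← Nat.add_assoc, Function.iterate_succ_apply']
    refine hθ.caMap_eq (q := p + max (-(r : ℤ)) (min r (q - p))) (ih ?_) ?_
    · have hdr : (0 : ℤ) ≤ d * r := by positivity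
      rw [Nat.cast_succ, add_one_mul] at h
      rw [abs_le] at h ⊢
      omega
    · rw [abs_le]
      omega

theorem iterate_const (hθ : SpreadingRule f θ) (J : ℕ) :
    (caMap r f)^[J] (fun _ => θ) = fun _ => θ :=
  Function.iterate_fixed (funext fun p => hθ.caMap_eq (q := p) rfl (by simp)) J

theorem nilpotent_iff (hθ : SpreadingRule f θ) :
    Nilpotent (caMap r f) ↔ ∃ J, ∀ x p, (caMap r f)^[J] x p = θ := by
  refine exists_congr fun J => ⟨?_, fun h => ⟨fun _ => θ, ?_⟩⟩
  · rintro ⟨c, hc⟩ x p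
    have hmem : ∀ y, (caMap r f)^[J] y = c := fun y => hc.subset ⟨y, rfl⟩
    rw [hmem x, ← hmem fun _ => θ, hθ.iterate_const]
  · have hconst : ∀ x, (caMap r f)^[J] x = fun _ => θ := fun x => funext (h x)
    exact Set.eq_singleton_iff_unique_mem.2
      ⟨⟨fun _ => θ, hconst _⟩, by rintro _ ⟨x, rfl⟩; exact hconst x⟩

end Rule

section Factor

variable {f : (Fin (2 * r + 1) → A) → A} {g : (Fin (2 * r + 1) → B) → B}
  {π : A → B} {θ : A}

theorem of_factor (hθ : SpreadingRule f θ) (hπ : Function.Surjective π)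
    (hfg : ∀ u, π (f u) = g (π ∘ u)) (hπθ : ∀ a, π a = π θ → a = θ) :
    SpreadingRule g (π θ) := by
  rintro v ⟨j, hj⟩
  obtain ⟨u, rfl⟩ := hπ.comp_left v
  rw [← hfg, hθ u ⟨j, hπθ _ hj⟩]

theorem nilpotent_iff_of_factor (hθ : SpreadingRule f θ)
    (hπ : Function.Surjective π) (hfg : ∀ u, π (f u) = g (π ∘ u))
    (hπθ : ∀ a, π a = π θ → a = θ) :
    Nilpotent (caMap r f) ↔ Nilpotent (caMap r g) := by
  have hsemiconj : Function.Semiconj (π ∘ ·) (caMap r f) (caMap r g) :=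
    fun x => funext fun p => hfg _
  rw [hθ.nilpotent_iff, (hθ.of_factor hπ hfg hπθ).nilpotent_iff]
  refine exists_congr fun J => ⟨fun h y p => ?_, fun h x p => hπθ _ ?_⟩
  · obtain ⟨x, rfl⟩ := hπ.comp_left y
    rw [← (hsemiconj.iterate_right J).eq x, Function.comp_apply, h]
  · rw [← h (π ∘ x) p, ← (hsemiconj.iterate_right J).eq x, Function.comp_apply]

end Factor

end SpreadingRule

end Spreading

namespace SignalGrid

open Turing Encodable

/-! ### Base-4 expansions -/

/-- The base-4 digit of `n` at position `l`. -/
def digit (n l : ℕ) : ℕ := n / 4 ^ l % 4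

/-- The number of trailing zeros in the base-4 expansion of `n`. The value at `0` is the junk
value `1` of `multiplicity`. -/
noncomputable def level (n : ℕ) : ℕ := multiplicity 4 n

/-- The lowest nonzero digit in the base-4 expansion of `n`. -/
noncomputable def lowDigit (n : ℕ) : ℕ := digit n (level n)

theorem digit_lt (n l : ℕ) : digit n l < 4 := Nat.mod_lt _ (by norm_num)

theorem digit_zero (n : ℕ) : digit n 0 = n % 4 := by simp [digit]

theorem digit_succ (n l : ℕ) : digit n (l + 1) = digit (n / 4) l := by
  rw [digit, digit, pow_succ', Nat.div_div_eq_div_mul]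

theorem digit_of_lt {n l : ℕ} (h : n < 4 ^ l) : digit n l = 0 := by
  rw [digit, Nat.div_eq_of_lt h]

theorem digit_eq_zero_iff {n l : ℕ} (h : 4 ^ l ∣ n) : digit n l = 0 ↔ 4 ^ (l + 1) ∣ n := by
  obtain ⟨c, rfl⟩ := h
  rw [digit, Nat.mul_div_cancel_left _ (by positivity), ← Nat.dvd_iff_mod_eq_zero, pow_succ,
    Nat.mul_dvd_mul_iff_left (by positivity)]

theorem digit_add_of_lt {m n k l : ℕ} (h : 4 ^ k ∣ m) (hl : l < k) :
    digit (m + n) l = digit n l := by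
  obtain ⟨c, rfl⟩ := (pow_dvd_pow 4 (Nat.succ_le_of_lt hl)).trans h
  rw [digit, digit, pow_succ, mul_assoc, Nat.mul_add_div (by positivity), Nat.mul_add_mod]

theorem digit_add {m n l : ℕ} (h : 4 ^ l ∣ m) (hn : n < 4 ^ l) : digit (m + n) l = digit m l := by
  rw [digit, Nat.add_div_of_dvd_right h, Nat.div_eq_of_lt hn, add_zero, digit]

theorem digit_pow_self (l : ℕ) : digit (4 ^ l) l = 1 := by
  rw [digit, Nat.div_self (by positivity)]

theorem digit_two_mul_pow (l : ℕ) : digit (2 * 4 ^ l) l = 2 := by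
  rw [digit, Nat.mul_div_cancel _ (by positivity)]

theorem pow_dvd_iff_le_level {n l : ℕ} (hn : 0 < n) : 4 ^ l ∣ n ↔ l ≤ level n :=
  (Nat.finiteMultiplicity_iff.2 ⟨by norm_num, hn⟩).pow_dvd_iff_le_multiplicity

theorem pow_level_dvd (n : ℕ) : 4 ^ level n ∣ n := pow_multiplicity_dvd 4 n

theorem lowDigit_ne_zero {n : ℕ} (hn : 0 < n) : lowDigit n ≠ 0 := by
  rw [lowDigit, Ne, digit_eq_zero_iff (pow_level_dvd n), pow_dvd_iff_le_level hn]
  omega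

theorem lowDigit_lt (n : ℕ) : lowDigit n < 4 := digit_lt _ _

theorem level_eq {n l : ℕ} (h : 4 ^ l ∣ n) (hd : digit n l ≠ 0) : level n = l := by
  have hn : 0 < n := Nat.pos_of_ne_zero (by rintro rfl; simp [digit] at hd)
  rw [Ne, digit_eq_zero_iff h, pow_dvd_iff_le_level hn] at hd
  have := (pow_dvd_iff_le_level hn).1 h
  omega

theorem level_of_mod_ne_zero {n : ℕ} (h : n % 4 ≠ 0) : level n = 0 :=
  level_eq (by simp) (by rwa [digit_zero])

theorem lowDigit_of_mod_ne_zero {n : ℕ} (h : n % 4 ≠ 0) : lowDigit n = n % 4 := by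
  rw [lowDigit, level_of_mod_ne_zero h, digit_zero]

theorem level_four_mul {n : ℕ} (hn : 0 < n) : level (4 * n) = level n + 1 := by
  refine level_eq ?_ ?_
  · rw [pow_succ']
    exact Nat.mul_dvd_mul_left 4 (pow_level_dvd n)
  · rw [digit_succ, Nat.mul_div_cancel_left n (by norm_num)]
    exact lowDigit_ne_zero hn

theorem lowDigit_four_mul {n : ℕ} (hn : 0 < n) : lowDigit (4 * n) = lowDigit n := by
  rw [lowDigit, level_four_mul hn, digit_succ, Nat.mul_div_cancel_left n (by norm_num), lowDigit]

theorem level_pow (l : ℕ) : level (4 ^ l) = l := level_eq dvd_rfl (by simp [digit_pow_self])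

theorem lowDigit_pow (l : ℕ) : lowDigit (4 ^ l) = 1 := by
  rw [lowDigit, level_pow, digit_pow_self]

theorem level_lt_of_lt_pow {n l : ℕ} (hn : 0 < n) (h : n < 4 ^ l) : level n < l :=
  (Nat.pow_lt_pow_iff_right (by norm_num)).1
    ((Nat.le_of_dvd hn (pow_level_dvd n)).trans_lt h)

theorem digit_succ_of_level_lt {n l : ℕ} (h : level (n + 1) < l) :
    digit (n + 1) l = digit n l := by
  rw [digit, Nat.succ_div_of_not_dvd, digit]
  rw [pow_dvd_iff_le_level n.succ_pos]
  exact not_le.2 h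

theorem lowDigit_succ (n : ℕ) : lowDigit (n + 1) = digit n (level (n + 1)) + 1 := by
  have := lowDigit_ne_zero n.succ_pos
  rw [lowDigit, digit, Nat.succ_div_of_dvd (pow_level_dvd _)] at *
  rw [digit]
  omega

theorem digit_of_lt_level {n l : ℕ} (hn : 0 < n) (h : l < level n) : digit n l = 0 :=
  (digit_eq_zero_iff ((pow_dvd_iff_le_level hn).2 h.le)).2 ((pow_dvd_iff_le_level hn).2 h)

theorem digit_of_lt_level_succ {n l : ℕ} (h : l < level (n + 1)) : digit n l = 3 := by
  have h0 := digit_of_lt_level n.succ_pos h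
  rw [digit, Nat.succ_div_of_dvd ((pow_dvd_iff_le_level n.succ_pos).2 h.le)] at h0
  rw [digit]
  omega

/-! ### Arrays of counters -/

/-- A family of parallel lines crossing a transverse family. Line `m` carries a constant `digit`
and a constant `sample`, and a counter with value `count m n` on reaching the `n`-th transverse
line; `Advances m n` says that the counter is incremented there. -/
structure LineFamily where
  digit : ℕ → ℕ
  sample : ℕ → ℕ
  count : ℕ → ℕ → ℕ
  Advances : ℕ → ℕ → Prop

/-- The local rules for the lines of `R` on an `N × N` array of crossings with the lines of `S`.
The last field describes the signal running in the gap after line `m` of `R`. -/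
structure CounterLaw (N : ℕ) (R S : LineFamily) : Prop where
  count_lt : ∀ m n, R.count m n < 16
  advances_or : ∀ {m n}, m < N → n < N → R.Advances m n ∨ S.Advances n m
  count_mod_eq_zero : ∀ {m n}, m < N → n < N → ¬ S.Advances n m → R.count m n % 4 = 0
  count_mod_ne_zero : ∀ {m n}, m < N → n < N → R.Advances m n → S.Advances n m →
    R.count m n % 4 ≠ 0
  count_mod_eq_digit : ∀ {m n}, m < N → n < N → R.Advances m n → S.Advances n m →
    R.count m n % 4 = S.digit n
  count_succ : ∀ {m n}, m < N → n < N → R.Advances m n → R.count m (n + 1) = (R.count m n + 1) % 16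
  count_keep : ∀ {m n}, m < N → n < N → ¬ R.Advances m n → R.count m (n + 1) = R.count m n
  sync : ∀ {m n}, m < N → n < N → ¬ S.Advances n m → R.count m n ≠ 0 →
    S.digit n = R.count m n / 4 ∧ S.count n m % 4 = R.sample m
  gap : ∀ {m}, m < N → ∃ p κ, ∀ n < N, (n + p) % 4 ≠ 0 →
    S.digit n = (n + p) % 4 ∧ S.count n (m + 1) % 4 = κ

/-- An array of crossings in which both families obey the local rules. -/
structure CounterArray (N : ℕ) (R S : LineFamily) : Prop where
  row : CounterLaw N R S
  col : CounterLaw N S R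

/-- Away from the multiples of 4, the lines of `S` starting at line `β` behave like the finest
level of the hierarchy with respect to the lines of `R` starting at line `α`. -/
structure Aligned (N : ℕ) (R S : LineFamily) (α β : ℕ) : Prop where
  digit_eq : ∀ {j}, β + j < N → j % 4 ≠ 0 → S.digit (β + j) = j % 4
  advances : ∀ {i j}, α + i < N → β + j < N → j % 4 ≠ 0 → S.Advances (β + j) (α + i)
  count_mod : ∀ {i j}, α + i < N → β + j < N → j % 4 ≠ 0 → S.count (β + j) (α + i) % 4 = i % 4
  not_advances : ∀ {i j}, α + i < N → β + j < N → j % 4 ≠ 0 → i % 4 = 0 →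
    ¬ R.Advances (α + i) (β + j)

/-- The `L × L` window at `(α, β)` has the full hierarchical structure up to level `K`. -/
def Hierarchical (K L : ℕ) (S : LineFamily) (α β : ℕ) : Prop :=
  ∀ i < L, ∀ j < L, 0 < j → level j < K →
    S.digit (β + j) = lowDigit j ∧
      S.count (β + j) (α + i + 1) % 4 = (digit i (level j) + 1) % 4

theorem phase_unique {d : ℕ → ℕ} {p q s : ℕ}
    (hp : ∀ n, s ≤ n → n < s + 4 → (n + p) % 4 ≠ 0 → d n = (n + p) % 4)
    (hq : ∀ n, s ≤ n → n < s + 4 → (n + q) % 4 ≠ 0 → d n = (n + q) % 4) : p % 4 = q % 4 := by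
  have agree : ∀ n, s ≤ n → n < s + 4 → (n + p) % 4 ≠ 0 → (n + q) % 4 ≠ 0 →
      (n + p) % 4 = (n + q) % 4 :=
    fun n h1 h2 h3 h4 => (hp n h1 h2 h3).symm.trans (hq n h1 h2 h4)
  have agree₁ := agree (s + 1) (by omega) (by omega)
  have agree₂ := agree (s + 2) (by omega) (by omega)
  have agree₃ := agree (s + 3) (by omega) (by omega)
  omega

namespace CounterArray

variable {N : ℕ} {R S : LineFamily}

theorem swap (h : CounterArray N R S) : CounterArray N S R := ⟨h.col, h.row⟩

theorem exists_gap_phase (h : CounterArray N R S) (hN : 8 ≤ N) :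
    ∃ p, (∀ n < N, (n + p) % 4 ≠ 0 → S.digit n = (n + p) % 4) ∧
      ∀ m < N, ∃ κ, ∀ n < N, (n + p) % 4 ≠ 0 → S.count n (m + 1) % 4 = κ := by
  obtain ⟨p, _, hp⟩ := h.row.gap (m := 0) (by omega)
  refine ⟨p, fun n hn hne => (hp n hn hne).1, fun m hm => ?_⟩
  obtain ⟨p', κ, hp'⟩ := h.row.gap hm
  have hpp : p % 4 = p' % 4 := phase_unique (s := 0)
    (fun n _ hn hne => (hp n (by omega) hne).1) (fun n _ hn hne => (hp' n (by omega) hne).1)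
  exact ⟨κ, fun n hn hne => (hp' n hn (by omega)).2⟩

-- If one column of the finest level does not advance at row `m`, none does, since their counters
-- agree mod 4 before and after. Two adjacent ones then both force `R.count m _ % 4 = 0`.
theorem col_advances (h : CounterArray N R S) (hN : 8 ≤ N) {p : ℕ}
    (hκ : ∀ m < N, ∃ κ, ∀ n < N, (n + p) % 4 ≠ 0 → S.count n (m + 1) % 4 = κ)
    {m n : ℕ} (hm1 : 1 ≤ m) (hm : m < N) (hn : n < N) (hne : (n + p) % 4 ≠ 0) :
    S.Advances n m := by
  by_contra hnot
  obtain ⟨κ, hκm⟩ := hκ m hm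
  obtain ⟨κ', hκm'⟩ := hκ (m - 1) (by omega)
  rw [Nat.sub_add_cancel hm1] at hκm'
  have after_eq_before : κ = κ' := by
    rw [← hκm n hn hne, h.col.count_keep hn hm hnot, hκm' n hn hne]
  have none_advances : ∀ k < N, (k + p) % 4 ≠ 0 → ¬ S.Advances k m := by
    intro k hk hkne hadv
    have after := hκm k hk hkne
    have before := hκm' k hk hkne
    rw [h.col.count_succ hk hm hadv] at after
    omega
  obtain ⟨k, hk, hkp⟩ : ∃ k, k + 1 < N ∧ (k + p) % 4 = 1 :=
    ⟨(5 - p % 4) % 4, by omega, by omega⟩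
  have held := none_advances k (by omega) (by omega)
  have zero := h.row.count_mod_eq_zero hm (by omega) held
  have zero' := h.row.count_mod_eq_zero hm hk (none_advances (k + 1) hk (by omega))
  rw [h.row.count_succ hm (by omega) ((h.row.advances_or hm (by omega)).resolve_right held)]
    at zero'
  omega

theorem exists_phase (h : CounterArray N R S) (hN : 8 ≤ N) :
    ∃ p k, (∀ n < N, (n + p) % 4 ≠ 0 → S.digit n = (n + p) % 4) ∧
      (∀ m n, 1 ≤ m → m < N → n < N → (n + p) % 4 ≠ 0 → S.Advances n m) ∧
      ∀ m n, 1 ≤ m → m < N → n < N → (n + p) % 4 ≠ 0 → S.count n m % 4 = (m + k) % 4 := by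
  obtain ⟨p, hdigit, hκ⟩ := h.exists_gap_phase hN
  have hadv := fun m n => h.col_advances hN hκ (m := m) (n := n)
  obtain ⟨κ, hκ₀⟩ := hκ 0 (by omega)
  refine ⟨p, κ + 3, hdigit, hadv, fun m n hm1 hm hn hne => ?_⟩
  induction m, hm1 using Nat.le_induction with
  | base =>
    have := hκ₀ n hn hne
    rw [Nat.zero_add] at this
    omega
  | succ m hm1 ih =>
    have := ih (by omega)
    rw [h.col.count_succ hn (by omega) (hadv m n hm1 (by omega) hn hne)]
    omega

theorem phase_eq_of_count (h : CounterArray N R S) (hN : 8 ≤ N) {p q k : ℕ}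
    (hadv : ∀ m n, 1 ≤ m → m < N → n < N → (n + p) % 4 ≠ 0 → S.Advances n m)
    (hcount : ∀ m n, 1 ≤ m → m < N → n < N → (n + p) % 4 ≠ 0 → S.count n m % 4 = (m + k) % 4)
    (hdigit : ∀ m < N, (m + q) % 4 ≠ 0 → R.digit m = (m + q) % 4) : q % 4 = k % 4 := by
  obtain ⟨n, hn, hne⟩ : ∃ n < N, (n + p) % 4 ≠ 0 := ⟨(5 - p % 4) % 4, by omega, by omega⟩
  refine phase_unique (s := 1) (fun m _ hm => hdigit m (by omega)) fun m hm1 hm hne' => ?_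
  have count := hcount m n hm1 (by omega) hn hne
  have col := hadv m n hm1 (by omega) hn hne
  have row : R.Advances m n := by
    by_contra hnot
    have := h.col.count_mod_eq_zero hn (by omega) hnot
    omega
  rw [← h.col.count_mod_eq_digit hn (by omega) col row, count]

theorem exists_aligned (h : CounterArray N R S) (hN : 8 ≤ N) :
    ∃ α β, 1 ≤ α ∧ α ≤ 4 ∧ 1 ≤ β ∧ β ≤ 4 ∧ Aligned N R S α β ∧ Aligned N S R β α := by
  have half : ∀ {R S : LineFamily} {p q k : ℕ}, CounterArray N R S →
      (∀ n < N, (n + p) % 4 ≠ 0 → S.digit n = (n + p) % 4) →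
      (∀ m n, 1 ≤ m → m < N → n < N → (n + p) % 4 ≠ 0 → S.Advances n m) →
      (∀ m n, 1 ≤ m → m < N → n < N → (n + p) % 4 ≠ 0 → S.count n m % 4 = (m + k) % 4) →
      (∀ m < N, (m + q) % 4 ≠ 0 → R.digit m = (m + q) % 4) →
      Aligned N R S (4 - q % 4) (4 - p % 4) := by
    intro R S p q k h hdigit hadv hcount hdigit'
    have hqk := h.phase_eq_of_count hN hadv hcount hdigit'
    refine ⟨fun {j} hj hne => ?_, fun {i j} hi hj hne => hadv _ _ (by omega) hi hj (by omega),
      fun {i j} hi hj hne => ?_, fun {i j} hi hj hne hi0 hrow => ?_⟩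
    · rw [hdigit _ hj (by omega)]
      omega
    · rw [hcount _ _ (by omega) hi hj (by omega)]
      omega
    · have := h.col.count_mod_ne_zero hj hi (hadv _ _ (by omega) hi hj (by omega)) hrow
      rw [hcount _ _ (by omega) hi hj (by omega)] at this
      omega
  obtain ⟨p, k, hdigit, hadv, hcount⟩ := h.exists_phase hN
  obtain ⟨q, l, hdigit', hadv', hcount'⟩ := h.swap.exists_phase hN
  exact ⟨4 - q % 4, 4 - p % 4, by omega, by omega, by omega, by omega,
    half h hdigit hadv hcount hdigit', half h.swap hdigit' hadv' hcount' hdigit⟩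

end CounterArray

/-- Every fourth line, starting from line `α`, as seen from every fourth transverse line,
starting from line `β`. -/
def LineFamily.coarsen (R : LineFamily) (α β : ℕ) : LineFamily where
  digit m := R.digit (α + 4 * m)
  sample m := R.sample (α + 4 * m)
  count m n := R.count (α + 4 * m) (β + 4 * n)
  Advances m n := R.Advances (α + 4 * m) (β + 4 * n)

section Coarsen

variable {N α β : ℕ} {R S : LineFamily}

theorem Aligned.count_coarse (hR : Aligned N S R β α) (h : CounterLaw N S R) {i j r : ℕ}
    (hi : α + 4 * i + 4 < N) (hj : β + 4 * j < N) (hr : r ≤ 3) :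
    S.count (β + 4 * j) (α + (4 * i + r) + 1) = S.count (β + 4 * j) (α + 4 * (i + 1)) := by
  have keep : ∀ s, 1 ≤ s → s ≤ 3 → S.count (β + 4 * j) (α + (4 * i + s) + 1) =
      S.count (β + 4 * j) (α + (4 * i + s)) := fun s h1 h3 =>
    h.count_keep hj (by omega) (hR.not_advances hj (by omega) (by omega) (by omega))
  have keep₁ := keep 1 (by omega) (by omega)
  have keep₂ := keep 2 (by omega) (by omega)
  have keep₃ := keep 3 (by omega) (by omega)
  interval_cases r
  · exact keep₁.symm.trans (keep₂.symm.trans keep₃.symm)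
  · exact keep₂.symm.trans keep₃.symm
  · exact keep₃.symm
  · rfl

theorem Aligned.count_finest (hR : Aligned N S R β α) (h : CounterLaw N R S) {m n : ℕ}
    (hm : α + 4 * m + 1 < N) (hn : β + 4 * n < N) :
    R.count (α + 4 * m + 1) (β + 4 * n) = 4 * ((n + R.count (α + 4 * m + 1) β / 4) % 4) := by
  induction n with
  | zero =>
    have := hR.count_mod (i := 0) (j := 4 * m + 1) (by omega) (by omega) (by omega)
    have := h.count_lt (α + 4 * m + 1) β
    simp only [Nat.mul_zero, Nat.add_zero, Nat.zero_add, ← Nat.add_assoc] at *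
    omega
  | succ n ih =>
    have step : ∀ s ≤ 3, R.count (α + 4 * m + 1) (β + (4 * n + s) + 1) =
        (R.count (α + 4 * m + 1) (β + (4 * n + s)) + 1) % 16 := fun s hs =>
      h.count_succ hm (by omega) (hR.advances (j := 4 * m + 1) (by omega) (by omega) (by omega))
    have step₀ := step 0 (by omega)
    have step₁ := step 1 (by omega)
    have step₂ := step 2 (by omega)
    have step₃ := step 3 (by omega)
    have := ih (by omega)
    simp only [Nat.add_zero, Nat.add_assoc, Nat.reduceAdd, Nat.mul_add, Nat.mul_one] at *
    omega

theorem CounterLaw.coarsen (h : CounterLaw N R S) (h' : CounterLaw N S R)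
    (hS : Aligned N R S α β) (hR : Aligned N S R β α) (hα : α ≤ 4) (hβ : β ≤ 4) :
    CounterLaw ((N - 8) / 4) (R.coarsen α β) (S.coarsen β α) where
  count_lt _ _ := h.count_lt _ _
  advances_or _ _ := h.advances_or (by omega) (by omega)
  count_mod_eq_zero _ _ := h.count_mod_eq_zero (by omega) (by omega)
  count_mod_ne_zero _ _ := h.count_mod_ne_zero (by omega) (by omega)
  count_mod_eq_digit _ _ := h.count_mod_eq_digit (by omega) (by omega)
  count_succ {m n} hm hn hadv :=
    (hS.count_coarse h (r := 0) (by omega) (by omega) (by omega)).symm.trans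
      (h.count_succ (by omega) (by omega) hadv)
  count_keep {m n} hm hn hadv :=
    (hS.count_coarse h (r := 0) (by omega) (by omega) (by omega)).symm.trans
      (h.count_keep (by omega) (by omega) hadv)
  sync _ _ := h.sync (by omega) (by omega)
  -- The finest row just after row `α + 4 * m` plays the role of the gap signal.
  gap {m} hm := by
    refine ⟨R.count (α + 4 * m + 1) β / 4, R.sample (α + 4 * m + 1), fun n hn hne => ?_⟩
    have count := hR.count_finest h (m := m) (n := n) (by omega) (by omega)
    have held : ¬ S.Advances (β + 4 * n) (α + 4 * m + 1) :=
      hR.not_advances (j := 4 * m + 1) (by omega) (by omega) (by omega) (by omega)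
    obtain ⟨hdigit, hsample⟩ := h.sync (by omega) (by omega) held (by omega)
    have coarse := hR.count_coarse h' (i := m) (j := n) (r := 0) (by omega) (by omega) (by omega)
    exact ⟨by rw [count] at hdigit; exact hdigit.trans (by omega), by
      rw [← hsample]; exact congrArg (· % 4) coarse.symm⟩

theorem CounterArray.coarsen (h : CounterArray N R S) (hS : Aligned N R S α β)
    (hR : Aligned N S R β α) (hα : α ≤ 4) (hβ : β ≤ 4) :
    CounterArray ((N - 8) / 4) (R.coarsen α β) (S.coarsen β α) :=
  ⟨h.row.coarsen h.col hS hR hα hβ, h.col.coarsen h.row hR hS hβ hα⟩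

theorem Hierarchical.of_coarsen {K L α' β' : ℕ} (h : CounterLaw N S R) (hS : Aligned N R S α β)
    (hR : Aligned N S R β α) (hα : α + 4 * α' + 4 * L < N) (hβ : β + 4 * β' + 4 * L < N)
    (hH : Hierarchical K L (S.coarsen β α) α' β') :
    Hierarchical (K + 1) L S (α + 4 * α') (β + 4 * β') := by
  intro i hi j hj hj0 hlevel
  by_cases hj4 : j % 4 = 0
  · obtain ⟨j, rfl⟩ := Nat.dvd_of_mod_eq_zero hj4
    rw [level_four_mul (by omega)] at hlevel ⊢
    rw [lowDigit_four_mul (by omega), digit_succ]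
    obtain ⟨hdigit, hcount⟩ :=
      hH (i / 4) (by omega) j (by omega) (by omega) (by omega)
    have coarse := hR.count_coarse h (i := α' + i / 4) (j := β' + j) (r := i % 4)
      (by omega) (by omega) (by omega)
    rw [show α + (4 * (α' + i / 4) + i % 4) + 1 = α + 4 * α' + i + 1 by omega] at coarse
    rw [show β + 4 * β' + 4 * j = β + 4 * (β' + j) by omega, coarse]
    exact ⟨hdigit, hcount⟩
  · rw [level_of_mod_ne_zero hj4, lowDigit_of_mod_ne_zero hj4, digit_zero,
      show β + 4 * β' + j = β + (4 * β' + j) by omega,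
      show α + 4 * α' + i + 1 = α + (4 * α' + i + 1) by omega,
      hS.digit_eq (by omega) (by omega), hS.count_mod (by omega) (by omega) (by omega)]
    omega

end Coarsen

theorem exists_hierarchical (K L : ℕ) : ∃ N₀, ∀ (N : ℕ) (R S : LineFamily), CounterArray N R S →
    N₀ ≤ N → ∃ α β, α + L ≤ N ∧ β + L ≤ N ∧ Hierarchical K L S α β ∧ Hierarchical K L R β α := by
  induction K with
  | zero => exact ⟨L, fun N R S _ hN => ⟨0, 0, by omega, by omega,
      fun _ _ _ _ _ h => absurd h (Nat.not_lt_zero _),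
      fun _ _ _ _ _ h => absurd h (Nat.not_lt_zero _)⟩⟩
  | succ K ih =>
    obtain ⟨N₀, hN₀⟩ := ih
    refine ⟨4 * N₀ + 4 * L + 40, fun N R S h hN => ?_⟩
    obtain ⟨α, β, -, hα, -, hβ, hS, hR⟩ := h.exists_aligned (by omega)
    obtain ⟨α', β', hα', hβ', hHS, hHR⟩ := hN₀ _ _ _ (h.coarsen hS hR hα hβ) (by omega)
    exact ⟨α + 4 * α', β + 4 * β', by omega, by omega,
      hHS.of_coarsen h.col hS hR (by omega) (by omega),
      hHR.of_coarsen h.row hR hS (by omega) (by omega)⟩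

/-! ### Crossings of signals -/

section Crossing

/-- The computation carried by the signals: a row in state `x` and a column in state `y` leave
their crossing in the states `step x y`, unless `bad x y` holds. -/
structure Computation (X Y : Type*) where
  rowInit : X
  colInit : Y
  step : X → Y → X × Y
  bad : X → Y → Bool

/-- The computational part of a signal. A `ready` lane becomes active at the start of a zone. -/
inductive Lane (X : Type*) where
  | blocked : Lane X
  | ready : Lane X
  | active : X → Lane X

/-- The state of a line between two crossings. The fields `digit`, `count` and `sample` are those
of `LineFamily`; `gapDigit` and `gapSample` belong to the signal in the gap after the line, and
`tie` decides which counter advances when both are divisible by 4. -/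
@[ext]
structure Signal (X : Type*) where
  digit : Fin 4
  count : Fin 16
  sample : Fin 4
  tie : Bool
  gapDigit : Fin 4
  gapSample : Fin 4
  lane : Lane X

variable {X Y : Type*}

/-- Whether a counter with value `m` advances on crossing one with value `n`. -/
def Advances (tie : Bool) (m n : ℕ) : Prop := n % 4 = 0 → m % 4 = 0 ∧ tie = false

instance (tie : Bool) (m n : ℕ) : Decidable (Advances tie m n) :=
  inferInstanceAs (Decidable (_ → _))

namespace Lane

/-- Apply a function to the state of an active lane. -/
def map (f : X → Y) : Lane X → Lane Y
  | blocked => blocked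
  | ready => ready
  | active x => active (f x)

/-- The status of a lane, forgetting its state. -/
def shape (s : Lane X) : Lane Unit := s.map fun _ => ()

/-- The effect of a transverse line with digit `d` on a lane lying inside a zone of its level: the
digits `1`, `2`, `3` stand for the preparation, the start and the end of the zone. -/
def mark (x₀ : X) : ℕ → Lane X → Lane X
  | 1, _ => ready
  | 2, ready => active x₀
  | 3, _ => blocked
  | _, s => s

/-- The lane of a line meeting a transverse line with digit `d` whose counter becomes `c` modulo 4.
The line lies inside a zone of the level of the transverse line when `c` is `2` or `3`. -/
def enter (x₀ : X) (d c : ℕ) (s : Lane X) : Lane X :=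
  if c = 2 ∨ c = 3 then s.mark x₀ d else s

/-- Two active lanes take a step of the computation; all others cross unchanged. -/
def interact (step : X → Y → X × Y) : Lane X → Lane Y → Lane X × Lane Y
  | active x, active y => (active (step x y).1, active (step x y).2)
  | s, t => (s, t)

/-- Both lanes are active, in states rejected by `bad`. -/
def Clash (bad : X → Y → Bool) : Lane X → Lane Y → Prop
  | active x, active y => bad x y = true
  | _, _ => False

theorem map_enter (f : X → Y) (x₀ : X) (d c : ℕ) (s : Lane X) :
    (s.enter x₀ d c).map f = (s.map f).enter (f x₀) d c := by
  unfold enter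
  split_ifs
  · rcases d with _ | _ | _ | _ | d <;> cases s <;> rfl
  · rfl

theorem shape_enter (x₀ : X) (d c : ℕ) (s : Lane X) :
    (s.enter x₀ d c).shape = s.shape.enter () d c := map_enter _ _ _ _ _

theorem shape_interact_fst (step : X → Y → X × Y) (s : Lane X) (t : Lane Y) :
    (interact step s t).1.shape = s.shape := by
  cases s <;> cases t <;> rfl

theorem interact_fst_of_shape_ne (step : X → Y → X × Y) (s : Lane X) {t : Lane Y}
    (ht : t.shape ≠ active ()) : (interact step s t).1 = s := by
  cases s <;> cases t <;> first | rfl | exact absurd rfl ht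

theorem interact_swap (step : X → Y → X × Y) (s : Lane X) (t : Lane Y) :
    interact (fun y x => (step x y).swap) t s = (interact step s t).swap := by
  cases s <;> cases t <;> rfl

theorem Clash.shape_eq {bad : X → Y → Bool} {s : Lane X} {t : Lane Y} (h : Clash bad s t) :
    s.shape = active () ∧ t.shape = active () := by
  cases s <;> cases t <;> first | exact ⟨rfl, rfl⟩ | exact h.elim

end Lane

namespace Signal

/-- The counter of the line `h` after crossing `v`. -/
def nextCount (tie : Bool) (h : Signal X) (v : Signal Y) : Fin 16 :=
  if Advances tie h.count v.count then h.count + 1 else h.count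

/-- The lane of the line `h` on crossing `v`, before the two lanes interact. -/
def midLane (tie : Bool) (x₀ : X) (h : Signal X) (v : Signal Y) : Lane X :=
  h.lane.enter x₀ v.digit (v.nextCount (!tie) h % 4)

/-- The line `h` after crossing `v`, with given new tie bit and lane. -/
def cross (tie : Bool) (h : Signal X) (v : Signal Y) (tie' : Bool) (s : Lane X) : Signal X where
  digit := h.digit
  count := h.nextCount tie v
  sample := h.sample
  tie := tie'
  gapDigit := h.gapDigit + 1
  gapSample := h.gapSample
  lane := s

/-- The checks made by the line `h` on crossing `v`; compare `CounterLaw`. -/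
structure Accepts (tie : Bool) (h : Signal X) (v : Signal Y) : Prop where
  count_mod_eq_digit : Advances tie h.count v.count → Advances (!tie) v.count h.count →
    (h.count : ℕ) % 4 = v.digit
  sync : ¬ Advances (!tie) v.count h.count → (h.count : ℕ) ≠ 0 →
    (v.digit : ℕ) = h.count / 4 ∧ (v.count : ℕ) % 4 = h.sample
  gap : (h.gapDigit : ℕ) ≠ 0 →
    (v.digit : ℕ) = h.gapDigit ∧ (v.nextCount (!tie) h : ℕ) % 4 = h.gapSample

end Signal

namespace Computation

variable (C : Computation X Y) (h : Signal X) (v : Signal Y)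

/-- The lanes at a crossing, before they interact. -/
def midLanes : Lane X × Lane Y :=
  (h.midLane v.tie C.rowInit v, v.midLane (!v.tie) C.colInit h)

/-- The lanes leaving a crossing. -/
def outLanes : Lane X × Lane Y :=
  Lane.interact C.step (C.midLanes h v).1 (C.midLanes h v).2

/-- The row leaving a crossing. The tie bits of rows and columns combine to a signal that moves
along the diagonal: the bit computed here decides the crossing at `(i + 1, j + 1)`. -/
def rowOut : Signal X :=
  h.cross v.tie v
    (if Advances v.tie h.count v.count ∧ Advances (!v.tie) v.count h.count then v.tie
      else decide (Advances v.tie h.count v.count))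
    (C.outLanes h v).1

/-- The column leaving a crossing. -/
def colOut : Signal Y := v.cross (!v.tie) h h.tie (C.outLanes h v).2

/-- The crossing passes all checks. -/
structure Valid : Prop where
  row : h.Accepts v.tie v
  col : v.Accepts (!v.tie) h
  not_clash : ¬ Lane.Clash C.bad (C.midLanes h v).1 (C.midLanes h v).2

end Computation

/-- An `N × N` array of valid crossings; `H i j` and `V i j` enter the crossing `(i, j)`. -/
structure Grid (C : Computation X Y) (N : ℕ) (H : ℕ → ℕ → Signal X) (V : ℕ → ℕ → Signal Y) :
    Prop where
  valid : ∀ {i j}, i < N → j < N → C.Valid (H i j) (V i j)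
  row_succ : ∀ {i j}, i < N → j < N → H i (j + 1) = C.rowOut (H i j) (V i j)
  col_succ : ∀ {i j}, i < N → j < N → V (i + 1) j = C.colOut (H i j) (V i j)

/-- The pairs of inputs to the crossings of an array whose boundary inputs are `a₀` and `b₀` and
whose crossing `(i, j)` acts by `f i j`. -/
def sweep {A B : Type*} (a₀ : A) (b₀ : B) (f : ℕ → ℕ → A × B → A × B) : ℕ → ℕ → A × B
  | 0, 0 => (a₀, b₀)
  | 0, j + 1 => ((f 0 j (sweep a₀ b₀ f 0 j)).1, b₀)
  | i + 1, 0 => (a₀, (f i 0 (sweep a₀ b₀ f i 0)).2)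
  | i + 1, j + 1 => ((f (i + 1) j (sweep a₀ b₀ f (i + 1) j)).1,
      (f i (j + 1) (sweep a₀ b₀ f i (j + 1))).2)
termination_by i j => i + j

section Sweep

variable {A B : Type*} (a₀ : A) (b₀ : B) (f : ℕ → ℕ → A × B → A × B) (i j : ℕ)

theorem sweep_fst_zero : (sweep a₀ b₀ f i 0).1 = a₀ := by cases i <;> rw [sweep]

theorem sweep_snd_zero : (sweep a₀ b₀ f 0 j).2 = b₀ := by cases j <;> rw [sweep]

theorem sweep_fst_succ : (sweep a₀ b₀ f i (j + 1)).1 = (f i j (sweep a₀ b₀ f i j)).1 := by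
  cases i <;> rw [sweep]

theorem sweep_snd_succ : (sweep a₀ b₀ f (i + 1) j).2 = (f i j (sweep a₀ b₀ f i j)).2 := by
  cases j <;> rw [sweep]

end Sweep

namespace Computation

/-- The states entering the crossings of an undisturbed array performing the computation. -/
def states (C : Computation X Y) : ℕ → ℕ → X × Y :=
  sweep C.rowInit C.colInit fun _ _ p => C.step p.1 p.2

/-- The computation never reaches a bad crossing. -/
def Safe (C : Computation X Y) : Prop :=
  ∀ i j, C.bad (C.states i j).1 (C.states i j).2 = false

/-- The computation with the roles of rows and columns exchanged. -/
def swap (C : Computation X Y) : Computation Y X where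
  rowInit := C.colInit
  colInit := C.rowInit
  step y x := (C.step x y).swap
  bad y x := C.bad x y

end Computation

end Crossing

/-! ### Zones and lanes -/

/-- The digits for which a line lies inside a zone of the corresponding level. -/
def Inside (d : ℕ) : Prop := d = 1 ∨ d = 2

instance : DecidablePred Inside := fun d => inferInstanceAs (Decidable (d = 1 ∨ d = 2))

/-- The line `y` avoids the zones of all levels below `K`. These lines carry the computation
performed in a zone of level `K`. -/
def Free (K y : ℕ) : Prop := ∀ l < K, ¬ Inside (digit y l)

instance (K : ℕ) : DecidablePred (Free K) := fun y =>
  inferInstanceAs (Decidable (∀ l < K, ¬ Inside (digit y l)))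

/-- `l` is the least level of a zone containing line `i`; its lane is reserved for that level. -/
def IsHome (i l : ℕ) : Prop := Inside (digit i l) ∧ Free l i

/-- The lane statuses allowed at a transverse line with digit `d` at the home level. -/
def Fits : ℕ → Lane Unit → Prop
  | 1, s => s = .ready
  | 2, s => s = .active ()
  | 3, s => s = .blocked
  | _, s => s ≠ .active ()

/-- The lane statuses allowed on line `i` at the transverse line `j`. -/
def LaneShape (i j : ℕ) (s : Lane Unit) : Prop :=
  (∀ l, IsHome i l → Fits (digit j l) s) ∧ ((∀ l, ¬ IsHome i l) → Fits 0 s)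

theorem exists_isHome {i l : ℕ} (h : Inside (digit i l)) : ∃ k ≤ l, IsHome i k := by
  classical
  have hex : ∃ l, Inside (digit i l) := ⟨l, h⟩
  exact ⟨Nat.find hex, Nat.find_min' hex h, Nat.find_spec hex, fun _ hl => Nat.find_min hex hl⟩

section LaneShape

variable {X : Type*}

theorem enter_of_not_inside {x₀ : X} {d e : ℕ} {s : Lane X} (he : e < 4) (h : ¬ Inside e) :
    s.enter x₀ d ((e + 1) % 4) = s := by
  unfold Inside at h
  rw [Lane.enter, if_neg (by omega)]

theorem enter_of_inside {x₀ : X} {d e : ℕ} {s : Lane X} (h : Inside e) :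
    s.enter x₀ d ((e + 1) % 4) = s.mark x₀ d := by
  unfold Inside at h
  rw [Lane.enter, if_pos (by omega)]

theorem Fits.mark_succ {d : ℕ} {s : Lane Unit} (h : Fits d s) (hd : d < 3) :
    Fits (d + 1) (s.mark () (d + 1)) := by
  interval_cases d <;> cases s <;> simp_all [Fits, Lane.mark]

theorem enter_blocked_ne (d c : ℕ) : (Lane.blocked.enter () d c) ≠ .active () := by
  unfold Lane.enter
  split_ifs
  · rcases d with _ | _ | _ | _ | d <;> simp [Lane.mark]
  · simp

theorem LaneShape.enter {i j : ℕ} {s : Lane Unit} (h : LaneShape i j s) :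
    LaneShape i (j + 1)
      (s.enter () (lowDigit (j + 1)) ((digit i (level (j + 1)) + 1) % 4)) := by
  refine ⟨fun l hl => ?_, fun hno => ?_⟩
  · have hfits := h.1 l hl
    rcases lt_trichotomy (level (j + 1)) l with hlt | rfl | hgt
    · rwa [enter_of_not_inside (digit_lt _ _) (hl.2 _ hlt), digit_succ_of_level_lt hlt]
    · have hlow := lowDigit_lt (j + 1)
      rw [lowDigit_succ] at hlow
      rw [enter_of_inside hl.1, ← lowDigit, lowDigit_succ]
      exact hfits.mark_succ (by omega)
    · rw [digit_of_lt_level_succ hgt] at hfits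
      rw [digit_of_lt_level j.succ_pos hgt, show s = .blocked from hfits]
      exact enter_blocked_ne _ _
  · rw [enter_of_not_inside (digit_lt _ _)]
    · exact h.2 hno
    · intro hin
      obtain ⟨l, -, hl⟩ := exists_isHome hin
      exact hno l hl

theorem LaneShape.exists_isHome_of_active {i j : ℕ} (h : LaneShape i j (.active ())) :
    ∃ l, IsHome i l ∧ digit j l = 2 := by
  by_contra! hne
  by_cases hno : ∀ l, ¬ IsHome i l
  · exact h.2 hno rfl
  · push Not at hno
    obtain ⟨l, hl⟩ := hno
    have hfits := h.1 l hl
    have hdigit := hne l hl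
    have hlt := digit_lt j l
    generalize digit j l = d at hfits hdigit hlt
    interval_cases d <;> simp_all [Fits]

theorem LaneShape.active_unique {i j k l : ℕ} (hk : IsHome i k) (hjk : digit j k = 2)
    (hl : IsHome j l) (hil : digit i l = 2) : k = l := by
  refine le_antisymm (not_lt.1 fun h => hk.2 l h (Or.inr hil)) ?_
  exact not_lt.1 fun h => hl.2 k h (Or.inr hjk)

end LaneShape

section Zone

variable {K I J x y : ℕ}

/-- Zones of level `K` begin at the lines `I` satisfying this condition. -/
def IsZoneStart (K I : ℕ) : Prop := 4 ^ K ∣ I ∧ digit I K = 2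

theorem IsZoneStart.pos (h : IsZoneStart K I) : 0 < I :=
  Nat.pos_of_ne_zero (by rintro rfl; simpa [digit] using h.2)

theorem IsZoneStart.lowDigit_eq (h : IsZoneStart K I) : lowDigit I = 2 := by
  rw [lowDigit, level_eq h.1 (by rw [h.2]; decide), h.2]

theorem IsZoneStart.level_eq (h : IsZoneStart K I) : level I = K :=
  SignalGrid.level_eq h.1 (by rw [h.2]; decide)

theorem IsZoneStart.isHome (h : IsZoneStart K I) (hy : y < 4 ^ K) (hf : Free K y) :
    IsHome (I + y) K := by
  refine ⟨?_, fun l hl => ?_⟩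
  · rw [digit_add h.1 hy, h.2]
    exact Or.inr rfl
  · rw [digit_add_of_lt h.1 hl]
    exact hf l hl

theorem LaneShape.ne_active_of_not_free (hI : 4 ^ K ∣ I) (hJ : 4 ^ K ∣ J) (hy : Free K y)
    (hx : ¬ Free K x) {s : Lane Unit} (h : LaneShape (J + x) (I + y) s) : s ≠ .active () := by
  rintro rfl
  obtain ⟨l, hl, hl'⟩ : ∃ l < K, Inside (digit x l) := by simpa [Free] using hx
  rw [← digit_add_of_lt hJ hl] at hl'
  obtain ⟨k, hk, hhome⟩ := exists_isHome hl'
  have hfits := h.1 k hhome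
  have hout := hy k (by omega)
  rw [← digit_add_of_lt hI (by omega)] at hout
  have hlt := digit_lt (I + y) k
  generalize digit (I + y) k = d at hfits hout hlt
  interval_cases d <;> simp_all [Fits, Inside]

theorem enter_of_free {X : Type*} {x₀ : X} {d : ℕ} {s : Lane X} (hI : 4 ^ K ∣ I) (hJ : 4 ^ K ∣ J)
    (hx : x + 1 < 4 ^ K) (hy : Free K y) :
    s.enter x₀ d ((digit (I + y) (level (J + x + 1)) + 1) % 4) = s := by
  have hlevel : level (J + x + 1) < K := by
    by_contra hle
    have hdvd := (pow_dvd_iff_le_level (J + x).succ_pos).2 (not_lt.1 hle)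
    exact Nat.not_dvd_of_pos_of_lt x.succ_pos hx ((Nat.dvd_add_right hJ).1 hdvd)
  refine enter_of_not_inside (digit_lt _ _) ?_
  rw [digit_add_of_lt hI hlevel]
  exact hy _ hlevel

theorem enter_zoneStart {X : Type*} {x₀ : X} {s : Lane X} (hI : IsZoneStart K I)
    (hJ : IsZoneStart K (J + 1)) (hy : y < 4 ^ K) (hf : Free K y)
    (h : LaneShape (I + y) J s.shape) :
    s.enter x₀ (lowDigit (J + 1)) ((digit (I + y) (level (J + 1)) + 1) % 4) = .active x₀ := by
  have hhome := hI.isHome hy hf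
  have hlow := lowDigit_succ J
  rw [hJ.lowDigit_eq, hJ.level_eq] at hlow
  have hready := h.1 K hhome
  rw [show digit J K = 1 by omega] at hready
  rw [hJ.level_eq, enter_of_inside hhome.1, hJ.lowDigit_eq]
  cases s <;> simp_all [Fits, Lane.shape, Lane.map, Lane.mark]

theorem free_pow_sub_one (K k : ℕ) : Free K (4 ^ k - 1) := by
  have hpos : 0 < 4 ^ k := by positivity
  intro l _
  rcases lt_or_ge l k with hlk | hkl
  · rw [digit_of_lt_level_succ (by rwa [Nat.sub_add_cancel hpos, level_pow])]
    decide
  · have hle : 4 ^ k ≤ 4 ^ l := Nat.pow_le_pow_right (by norm_num) hkl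
    rw [digit_of_lt (by omega)]
    decide

theorem injective_pow_sub_one : Function.Injective fun k : ℕ => 4 ^ k - 1 := fun k l h => by
  have hk : 0 < 4 ^ k := by positivity
  have hl : 0 < 4 ^ l := by positivity
  exact Nat.pow_right_injective (by norm_num) (show 4 ^ k = 4 ^ l by dsimp only at h; omega)

theorem lt_count_free (K : ℕ) : K < Nat.count (Free K) (4 ^ K) := by
  rw [Nat.count_eq_card_filter_range, Nat.lt_iff_add_one_le, ← Finset.card_range (K + 1)]
  refine Finset.card_le_card_of_injOn _ (fun k hk => ?_) injective_pow_sub_one.injOn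
  have hle : 4 ^ k ≤ 4 ^ K := Nat.pow_le_pow_right (by norm_num) (Finset.mem_range_succ_iff.1 hk)
  have hpos : 0 < 4 ^ k := by positivity
  exact Finset.mem_filter.2 ⟨Finset.mem_range.2 (by omega), free_pow_sub_one K k⟩

theorem exists_free {n : ℕ} (hn : n ≤ K) : ∃ y < 4 ^ K, Free K y ∧ Nat.count (Free K) y = n := by
  have hinf : {y | Free K y}.Infinite :=
    Set.infinite_of_injective_forall_mem injective_pow_sub_one (free_pow_sub_one K)
  exact ⟨Nat.nth (Free K) n, Nat.nth_lt_of_lt_count (hn.trans_lt (lt_count_free K)),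
    Nat.nth_mem_of_infinite hinf n, Nat.count_nth_of_infinite hinf n⟩

end Zone

/-! ### Lanes in an array of signals -/

section LaneArray

variable {X Y : Type*}

/-- The lanes before interaction, in an array of crossings whose row `i` and column `j` are the
`i`-th and `j`-th lines of ideal hierarchies. -/
structure LaneSystem (C : Computation X Y) (a b : ℕ) (s : ℕ → ℕ → Lane X) (t : ℕ → ℕ → Lane Y) :
    Prop where
  row_succ : ∀ {i j}, a ≤ i → i < b → a ≤ j → j + 1 < b →
    s i (j + 1) = (Lane.interact C.step (s i j) (t i j)).1.enter C.rowInit (lowDigit (j + 1))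
      ((digit i (level (j + 1)) + 1) % 4)
  col_succ : ∀ {i j}, a ≤ i → i + 1 < b → a ≤ j → j < b →
    t (i + 1) j = (Lane.interact C.step (s i j) (t i j)).2.enter C.colInit (lowDigit (i + 1))
      ((digit j (level (i + 1)) + 1) % 4)
  row_base : ∀ {i}, a ≤ i → i < b → LaneShape i a (s i a).shape
  col_base : ∀ {j}, a ≤ j → j < b → LaneShape j a (t a j).shape

namespace LaneSystem

variable {C : Computation X Y} {a b : ℕ} {s : ℕ → ℕ → Lane X} {t : ℕ → ℕ → Lane Y}

theorem swap (h : LaneSystem C a b s t) :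
    LaneSystem C.swap a b (fun j i => t i j) (fun j i => s i j) where
  row_succ hj hj' hi hi' := by
    rw [h.col_succ hi hi' hj hj', Computation.swap, Lane.interact_swap, Prod.fst_swap]
  col_succ hj hj' hi hi' := by
    rw [h.row_succ hi hi' hj hj', Computation.swap, Lane.interact_swap, Prod.snd_swap]
  row_base := h.col_base
  col_base := h.row_base

theorem row_shape (h : LaneSystem C a b s t) {i j : ℕ} (hi : a ≤ i) (hi' : i < b) (hj : a ≤ j)
    (hj' : j < b) : LaneShape i j (s i j).shape := by
  induction j, hj using Nat.le_induction with
  | base => exact h.row_base hi hi'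
  | succ j hj ih =>
    rw [h.row_succ hi hi' hj hj', Lane.shape_enter, Lane.shape_interact_fst]
    exact (ih (by omega)).enter

theorem col_shape (h : LaneSystem C a b s t) {i j : ℕ} (hi : a ≤ i) (hi' : i < b) (hj : a ≤ j)
    (hj' : j < b) : LaneShape j i (t i j).shape :=
  h.swap.row_shape hj hj' hi hi'

section Zone

variable {K I J x y : ℕ}

theorem row_zoneStart (h : LaneSystem C a b s t) (hI : IsZoneStart K I) (hJ : IsZoneStart K J)
    (haI : a ≤ I) (hIb : I + 4 ^ K ≤ b) (haJ : a < J) (hJb : J < b) (hy : y < 4 ^ K)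
    (hf : Free K y) : s (I + y) J = .active C.rowInit := by
  obtain ⟨J, rfl⟩ := Nat.exists_eq_add_one_of_ne_zero hJ.pos.ne'
  have hshape := h.row_shape (i := I + y) (j := J) (by omega) (by omega) (by omega) (by omega)
  rw [h.row_succ (by omega) (by omega) (by omega) hJb]
  refine enter_zoneStart hI hJ hy hf ?_
  rwa [Lane.shape_interact_fst]

theorem row_succ_of_free (h : LaneSystem C a b s t) (hI : IsZoneStart K I) (hJ : IsZoneStart K J)
    (haI : a ≤ I) (hIb : I + 4 ^ K ≤ b) (haJ : a ≤ J) (hJb : J + 4 ^ K ≤ b) (hy : y < 4 ^ K)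
    (hx : x + 1 < 4 ^ K) (hf : Free K y) :
    s (I + y) (J + (x + 1)) = if Free K x then
      (Lane.interact C.step (s (I + y) (J + x)) (t (I + y) (J + x))).1 else s (I + y) (J + x) := by
  rw [← Nat.add_assoc, h.row_succ (by omega) (by omega) (by omega) (by omega),
    enter_of_free hI.1 hJ.1 hx hf]
  split_ifs with hfx
  · rfl
  · exact Lane.interact_fst_of_shape_ne _ _ <| LaneShape.ne_active_of_not_free hI.1 hJ.1 hf hfx <|
      h.col_shape (by omega) (by omega) (by omega) (by omega)

theorem eq_states (h : LaneSystem C a b s t) (hI : IsZoneStart K I) (hJ : IsZoneStart K J)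
    (haI : a < I) (hIb : I + 4 ^ K ≤ b) (haJ : a < J) (hJb : J + 4 ^ K ≤ b) (hy : y < 4 ^ K)
    (hx : x < 4 ^ K) :
    (Free K y → s (I + y) (J + x) =
      .active (C.states (Nat.count (Free K) y) (Nat.count (Free K) x)).1) ∧
    (Free K x → t (I + y) (J + x) =
      .active (C.states (Nat.count (Free K) y) (Nat.count (Free K) x)).2) := by
  induction hn : x + y using Nat.strong_induction_on generalizing x y with
  | _ n ih =>
    constructor
    · intro hf
      rcases x with _ | x
      · rw [Nat.count_zero, Computation.states, sweep_fst_zero]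
        exact h.row_zoneStart hI hJ haI.le hIb haJ (by omega) hy hf
      · obtain ⟨hs, ht⟩ := ih (x + y) (by omega) hy (by omega) rfl
        rw [h.row_succ_of_free hI hJ haI.le hIb haJ.le hJb hy hx hf, Nat.count_succ]
        split_ifs with hfx
        · rw [hs hf, ht hfx, Computation.states, sweep_fst_succ]
          rfl
        · exact hs hf
    · intro hf
      rcases y with _ | y
      · rw [Nat.count_zero, Computation.states, sweep_snd_zero]
        exact h.swap.row_zoneStart hJ hI haJ.le hJb haI (by omega) hx hf
      · obtain ⟨hs, ht⟩ := ih (x + y) (by omega) (by omega) hx rfl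
        rw [h.swap.row_succ_of_free hJ hI haJ.le hJb haI.le hIb hx hy hf, Nat.count_succ]
        split_ifs with hfy
        · rw [hs hfy, ht hf, Computation.states, sweep_snd_succ]
          rfl
        · exact ht hf

end Zone

end LaneSystem

/-- The lines `H m` and their crossings with the lines `V n`, seen from the side of `H`. -/
structure LineBundle (N : ℕ) (tie : ℕ → ℕ → Bool) (H : ℕ → ℕ → Signal X) (V : ℕ → ℕ → Signal Y) :
    Prop where
  accepts : ∀ {m n}, m < N → n < N → (H m n).Accepts (tie m n) (V m n)
  cross : ∀ {m n}, m < N → n < N → ∃ b s, H m (n + 1) = (H m n).cross (tie m n) (V m n) b s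

/-- The counters of the lines `H m`. -/
def lineFamily (tie : ℕ → ℕ → Bool) (H : ℕ → ℕ → Signal X) (V : ℕ → ℕ → Signal Y) :
    LineFamily where
  digit m := (H m 0).digit
  sample m := (H m 0).sample
  count m n := (H m n).count
  Advances m n := Advances (tie m n) (H m n).count (V m n).count

namespace LineBundle

variable {N : ℕ} {tie : ℕ → ℕ → Bool} {H : ℕ → ℕ → Signal X} {V : ℕ → ℕ → Signal Y} {m n : ℕ}

theorem apply_eq {A : Type*} (h : LineBundle N tie H V) {f : Signal X → A}
    (hf : ∀ tie (h : Signal X) (v : Signal Y) b s, f (h.cross tie v b s) = f h) (hm : m < N)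
    (hn : n ≤ N) : f (H m n) = f (H m 0) := by
  induction n with
  | zero => rfl
  | succ n ih =>
    obtain ⟨b, s, hH⟩ := h.cross hm hn
    rw [hH, hf, ih (by omega)]

theorem digit_eq (h : LineBundle N tie H V) (hm : m < N) (hn : n ≤ N) :
    (H m n).digit = (H m 0).digit :=
  h.apply_eq (fun _ _ _ _ _ => rfl) hm hn

theorem sample_eq (h : LineBundle N tie H V) (hm : m < N) (hn : n ≤ N) :
    (H m n).sample = (H m 0).sample :=
  h.apply_eq (fun _ _ _ _ _ => rfl) hm hn

theorem gapSample_eq (h : LineBundle N tie H V) (hm : m < N) (hn : n ≤ N) :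
    (H m n).gapSample = (H m 0).gapSample :=
  h.apply_eq (fun _ _ _ _ _ => rfl) hm hn

theorem gapDigit_eq (h : LineBundle N tie H V) (hm : m < N) (hn : n ≤ N) :
    ((H m n).gapDigit : ℕ) = (n + (H m 0).gapDigit) % 4 := by
  induction n with
  | zero => rw [Nat.zero_add, Nat.mod_eq_of_lt (Fin.isLt _)]
  | succ n ih =>
    obtain ⟨b, s, hH⟩ := h.cross hm hn
    rw [hH, Signal.cross, Fin.val_add, ih (by omega), Fin.val_one]
    omega

theorem count_succ (h : LineBundle N tie H V) (hm : m < N) (hn : n < N) :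
    (H m (n + 1)).count = (H m n).nextCount (tie m n) (V m n) := by
  obtain ⟨b, s, hH⟩ := h.cross hm hn
  exact congrArg Signal.count hH

theorem midLane_eq (h : LineBundle N (fun n m => !tie m n) (fun n m => V m n) (fun n m => H m n))
    (hm : m < N) (hn : n < N) (x₀ : X) :
    (H m n).midLane (tie m n) x₀ (V m n) =
      (H m n).lane.enter x₀ (V 0 n).digit ((V (m + 1) n).count % 4) := by
  rw [Signal.midLane, ← h.count_succ hn hm, h.digit_eq hn hm.le]

theorem counterLaw (h : LineBundle N tie H V)
    (h' : LineBundle N (fun n m => !tie m n) (fun n m => V m n) (fun n m => H m n)) :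
    CounterLaw N (lineFamily tie H V)
      (lineFamily (fun n m => !tie m n) (fun n m => V m n) (fun n m => H m n)) where
  count_lt _ _ := Fin.isLt _
  advances_or {m n} _ _ := by
    simp only [lineFamily, Advances]
    cases tie m n <;> simp <;> omega
  count_mod_eq_zero _ _ hV := by
    simp only [lineFamily, Advances] at hV
    tauto
  count_mod_ne_zero {m n} _ _ hH hV := by
    simp only [lineFamily, Advances] at hH hV ⊢
    intro hzero
    rw [(hH (hV hzero).1).2] at hV
    exact Bool.noConfusion (hV hzero).2
  count_mod_eq_digit hm hn hH hV := by
    have hcheck := (h.accepts hm hn).count_mod_eq_digit hH hV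
    rwa [h'.digit_eq hn hm.le] at hcheck
  count_succ {m n} hm hn hH := by
    change Advances _ _ _ at hH
    change ((H m (n + 1)).count : ℕ) = ((H m n).count + 1) % 16
    rw [h.count_succ hm hn, Signal.nextCount, if_pos hH, Fin.val_add, Fin.val_one]
  count_keep {m n} hm hn hH := by
    change ¬ Advances _ _ _ at hH
    change ((H m (n + 1)).count : ℕ) = (H m n).count
    rw [h.count_succ hm hn, Signal.nextCount, if_neg hH]
  sync hm hn hV hne := by
    have hcheck := (h.accepts hm hn).sync hV hne
    rwa [h'.digit_eq hn hm.le, h.sample_eq hm hn.le] at hcheck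
  gap {m} hm := by
    refine ⟨(H m 0).gapDigit, (H m 0).gapSample, fun n hn hne => ?_⟩
    rw [← h.gapDigit_eq hm hn.le] at hne ⊢
    have hcheck := (h.accepts hm hn).gap hne
    rwa [← h'.count_succ hn hm, h'.digit_eq hn hm.le, h.gapSample_eq hm hn.le] at hcheck

theorem midLane_eq_of_hierarchical {K L α β i j : ℕ}
    (h : LineBundle N (fun n m => !tie m n) (fun n m => V m n) (fun n m => H m n))
    (hS : Hierarchical K L (lineFamily (fun n m => !tie m n) (fun n m => V m n) (fun n m => H m n))
      α β) (hα : α + L ≤ N) (hβ : β + L ≤ N) (hi : i < L) (hj : j < L) (hj₀ : 0 < j)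
    (hlevel : level j < K) (x₀ : X) :
    (H (α + i) (β + j)).midLane (tie (α + i) (β + j)) x₀ (V (α + i) (β + j)) =
      (H (α + i) (β + j)).lane.enter x₀ (lowDigit j) ((digit i (level j) + 1) % 4) := by
  obtain ⟨hdigit, hcount⟩ := hS i hi j hj hj₀ hlevel
  rw [h.midLane_eq (by omega) (by omega), ← hdigit, ← hcount]
  rfl

end LineBundle

theorem inside_digit {K i : ℕ} (hi : 4 ^ K ≤ i) (hi' : i < 3 * 4 ^ K) : Inside (digit i K) := by
  have h1 : 1 ≤ i / 4 ^ K := (Nat.one_le_div_iff (by positivity)).2 hi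
  have h3 : i / 4 ^ K < 3 := (Nat.div_lt_iff_lt_mul (by positivity)).2 hi'
  unfold Inside digit
  omega

theorem laneShape_enter_pow {K i : ℕ} (hi : 4 ^ K ≤ i) (hi' : i < 3 * 4 ^ K) (x₀ : X) (s : Lane X) :
    LaneShape i (4 ^ K)
      (s.enter x₀ (lowDigit (4 ^ K)) ((digit i (level (4 ^ K)) + 1) % 4)).shape := by
  have hin := inside_digit hi hi'
  rw [level_pow, enter_of_inside hin, lowDigit_pow]
  refine ⟨fun l hl => ?_, fun hno => absurd hin fun hin => ?_⟩
  · rcases lt_trichotomy l K with hlt | rfl | hgt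
    · rw [digit_of_lt_level (by positivity) (by rwa [level_pow])]
      simp [Fits, Lane.mark, Lane.shape, Lane.map]
    · rw [digit_pow_self]
      rfl
    · exact absurd hin (hl.2 K hgt)
  · obtain ⟨l, -, hl⟩ := exists_isHome hin
    exact hno l hl

namespace Grid

variable {C : Computation X Y} {N : ℕ} {H : ℕ → ℕ → Signal X} {V : ℕ → ℕ → Signal Y}

theorem rowBundle (g : Grid C N H V) : LineBundle N (fun m n => (V m n).tie) H V where
  accepts hm hn := (g.valid hm hn).row
  cross hm hn := ⟨_, _, g.row_succ hm hn⟩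

theorem colBundle (g : Grid C N H V) :
    LineBundle N (fun n m => !(V m n).tie) (fun n m => V m n) (fun n m => H m n) where
  accepts hn hm := (g.valid hm hn).col
  cross hn hm := ⟨_, _, g.col_succ hm hn⟩

theorem counterArray (g : Grid C N H V) :
    CounterArray N (lineFamily (fun m n => (V m n).tie) H V)
      (lineFamily (fun n m => !(V m n).tie) (fun n m => V m n) (fun n m => H m n)) where
  row := g.rowBundle.counterLaw g.colBundle
  col := by simpa using g.colBundle.counterLaw (by simpa using g.rowBundle)

theorem laneSystem (g : Grid C N H V) {K α β : ℕ} (hα : α + 3 * 4 ^ K ≤ N)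
    (hβ : β + 3 * 4 ^ K ≤ N)
    (hcol : Hierarchical (K + 1) (3 * 4 ^ K)
      (lineFamily (fun n m => !(V m n).tie) (fun n m => V m n) (fun n m => H m n)) α β)
    (hrow : Hierarchical (K + 1) (3 * 4 ^ K) (lineFamily (fun m n => (V m n).tie) H V) β α) :
    LaneSystem C (4 ^ K) (3 * 4 ^ K)
      (fun i j => (C.midLanes (H (α + i) (β + j)) (V (α + i) (β + j))).1)
      (fun i j => (C.midLanes (H (α + i) (β + j)) (V (α + i) (β + j))).2) := by
  have hpos : 0 < 4 ^ K := by positivity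
  have hlevel {j : ℕ} (hj : 0 < j) (hj' : j < 3 * 4 ^ K) : level j < K + 1 :=
    level_lt_of_lt_pow hj (by rw [pow_succ]; omega)
  have hmidRow {i j : ℕ} (hi : i < 3 * 4 ^ K) (hj : 0 < j) (hj' : j < 3 * 4 ^ K) :
      (C.midLanes (H (α + i) (β + j)) (V (α + i) (β + j))).1 = (H (α + i) (β + j)).lane.enter
        C.rowInit (lowDigit j) ((digit i (level j) + 1) % 4) :=
    g.colBundle.midLane_eq_of_hierarchical hcol hα hβ hi hj' hj (hlevel hj hj') _
  have hmidCol {i j : ℕ} (hj : j < 3 * 4 ^ K) (hi : 0 < i) (hi' : i < 3 * 4 ^ K) :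
      (C.midLanes (H (α + i) (β + j)) (V (α + i) (β + j))).2 = (V (α + i) (β + j)).lane.enter
        C.colInit (lowDigit i) ((digit j (level i) + 1) % 4) :=
    LineBundle.midLane_eq_of_hierarchical (tie := fun n m => !(V m n).tie) (H := fun n m => V m n)
      (V := fun n m => H m n) (by simpa using g.rowBundle) (by simpa using hrow) hβ hα hj hi' hi
      (hlevel hi hi') _
  constructor
  · intro i j _ hi' _ hj'
    rw [hmidRow hi' (by omega : 0 < j + 1) hj', ← Nat.add_assoc, g.row_succ (by omega) (by omega)]
    rfl
  · intro i j _ hi' _ hj'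
    rw [hmidCol hj' (by omega : 0 < i + 1) hi', ← Nat.add_assoc, g.col_succ (by omega) (by omega)]
    rfl
  · intro i hi hi'
    rw [hmidRow hi' hpos (by omega)]
    exact laneShape_enter_pow hi hi' _ _
  · intro j hj hj'
    rw [hmidCol hj' hpos (by omega)]
    exact laneShape_enter_pow hj hj' _ _

end Grid

theorem Computation.safe_of_grids {C : Computation X Y} (h : ∀ N, ∃ H V, Grid C N H V) :
    C.Safe := by
  intro m n
  obtain ⟨K, hm, hn⟩ : ∃ K, m ≤ K ∧ n ≤ K := ⟨max m n, le_max_left _ _, le_max_right _ _⟩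
  obtain ⟨N, hN⟩ := exists_hierarchical (K + 1) (3 * 4 ^ K)
  obtain ⟨H, V, g⟩ := h N
  obtain ⟨α, β, hα, hβ, hcol, hrow⟩ := hN _ _ _ g.counterArray le_rfl
  have hpos : 0 < 4 ^ K := by positivity
  have hzone : IsZoneStart K (2 * 4 ^ K) := ⟨Dvd.intro_left _ rfl, digit_two_mul_pow K⟩
  obtain ⟨y, hy, hfy, rfl⟩ := exists_free hm
  obtain ⟨x, hx, hfx, rfl⟩ := exists_free hn
  obtain ⟨hs, ht⟩ := (g.laneSystem hα hβ hcol hrow).eq_states hzone hzone (by omega) (by omega)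
    (by omega) (by omega) hy hx
  have hclash := (g.valid (i := α + (2 * 4 ^ K + y)) (j := β + (2 * 4 ^ K + x))
    (by omega) (by omega)).not_clash
  rw [hs hfy, ht hfx] at hclash
  exact Bool.eq_false_iff.2 hclash

end LaneArray

/-! ### Ideal arrays -/

section IdealArray

variable {X Y Z : Type*}

/-- The lexicographic order of base-4 expansions, lowest digit first. -/
def DigitLT (m n : ℕ) : Prop := ∃ k, digit m k < digit n k ∧ ∀ l < k, digit m l = digit n l

noncomputable instance (m n : ℕ) : Decidable (DigitLT m n) := Classical.propDecidable _

section DigitLT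

variable {m n : ℕ}

theorem DigitLT.asymm (h : DigitLT m n) : ¬ DigitLT n m := by
  obtain ⟨k, hk, hlow⟩ := h
  rintro ⟨k', hk', hlow'⟩
  rcases lt_trichotomy k k' with hlt | rfl | hgt
  · exact hk.ne' (hlow' k hlt)
  · exact hk.asymm hk'
  · exact hk'.ne' (hlow k' hgt)

theorem digitLT_of_level_lt (h : level (m + 1) < level (n + 1)) : DigitLT m n := by
  refine ⟨level (m + 1), ?_, fun l hl => ?_⟩
  · have hlow := lowDigit_lt (m + 1)
    rw [lowDigit_succ] at hlow
    rw [digit_of_lt_level_succ h]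
    omega
  · rw [digit_of_lt_level_succ hl, digit_of_lt_level_succ (hl.trans h)]

theorem digitLT_succ_of_level_lt (h : level (m + 1) < level (n + 1)) :
    DigitLT (n + 1) (m + 1) := by
  refine ⟨level (m + 1), ?_, fun l hl => ?_⟩
  · rw [digit_of_lt_level n.succ_pos h]
    exact Nat.pos_of_ne_zero (lowDigit_ne_zero m.succ_pos)
  · rw [digit_of_lt_level m.succ_pos hl, digit_of_lt_level n.succ_pos (hl.trans h)]

theorem digitLT_succ_iff (h : level (m + 1) = level (n + 1)) :
    DigitLT (m + 1) (n + 1) ↔ DigitLT m n := by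
  have hdigit (k : ℕ) : digit (m + 1) k + digit n k = digit (n + 1) k + digit m k := by
    rcases lt_trichotomy k (level (m + 1)) with hlt | rfl | hgt
    · rw [digit_of_lt_level m.succ_pos hlt, digit_of_lt_level_succ hlt, h] at *
      rw [digit_of_lt_level n.succ_pos hlt, digit_of_lt_level_succ hlt]
    · have hm := lowDigit_succ m
      have hn := lowDigit_succ n
      rw [lowDigit] at hm hn
      rw [h] at hm ⊢
      omega
    · rw [digit_succ_of_level_lt hgt, digit_succ_of_level_lt (h ▸ hgt), Nat.add_comm]
  refine exists_congr fun k => and_congr ?_ (forall₂_congr fun l _ => ?_)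
  · have := hdigit k
    omega
  · have := hdigit l
    omega

end DigitLT

/-- The counter of line `i + 1` of an ideal hierarchy on reaching line `j + 1`. -/
noncomputable def idealCount (i j : ℕ) : ℕ := (j / 4 ^ level (i + 1) + 1) % 16

/-- `tie` lets the finer of the lines `i + 1` and `j + 1` advance its counter. -/
def FavorsFiner (tie : Bool) (i j : ℕ) : Prop :=
  (level (i + 1) < level (j + 1) → tie = false) ∧ (level (j + 1) < level (i + 1) → tie = true)

section IdealCount

variable {i j : ℕ}

theorem FavorsFiner.not {tie : Bool} (h : FavorsFiner tie i j) : FavorsFiner (!tie) j i :=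
  ⟨fun hlt => by rw [h.2 hlt]; rfl, fun hlt => by rw [h.1 hlt]; rfl⟩

theorem idealCount_mod (i j : ℕ) : idealCount i j % 4 = (digit j (level (i + 1)) + 1) % 4 := by
  rw [idealCount, digit]
  omega

theorem idealCount_mod_of_level_lt (h : level (i + 1) < level (j + 1)) :
    idealCount i j % 4 = 0 := by
  rw [idealCount_mod, digit_of_lt_level_succ h]

theorem idealCount_mod_of_level_eq (h : level (i + 1) = level (j + 1)) :
    idealCount i j % 4 = lowDigit (j + 1) := by
  rw [idealCount_mod, h, ← lowDigit_succ, Nat.mod_eq_of_lt (lowDigit_lt _)]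

theorem idealCount_succ (i j : ℕ) : idealCount i (j + 1) =
    if level (i + 1) ≤ level (j + 1) then (idealCount i j + 1) % 16 else idealCount i j := by
  simp only [idealCount, Nat.succ_div, pow_dvd_iff_le_level j.succ_pos]
  split_ifs <;> omega

theorem idealCount_sync (h : level (i + 1) < level (j + 1)) (h₀ : idealCount i j ≠ 0) :
    lowDigit (j + 1) = idealCount i j / 4 ∧
      idealCount j i % 4 = (digit i (level (i + 1) + 1) + 1) % 4 := by
  have hdigit := digit_of_lt_level_succ h
  have hnext : digit j (level (i + 1) + 1) = j / 4 ^ level (i + 1) / 4 % 4 := by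
    rw [digit, pow_succ, Nat.div_div_eq_div_mul]
  rw [idealCount] at h₀ ⊢
  rw [digit] at hdigit
  have hlevel : level (j + 1) = level (i + 1) + 1 := by
    refine le_antisymm (not_lt.1 fun hlt => ?_) h
    rw [digit_of_lt_level_succ hlt] at hnext
    omega
  rw [idealCount_mod, lowDigit_succ, hlevel, hnext]
  exact ⟨by omega, rfl⟩

theorem advances_idealCount_iff {tie : Bool} (h : FavorsFiner tie i j) :
    Advances tie (idealCount i j) (idealCount j i) ↔ level (i + 1) ≤ level (j + 1) := by
  rcases lt_trichotomy (level (i + 1)) (level (j + 1)) with hlt | heq | hgt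
  · exact iff_of_true (fun _ => ⟨idealCount_mod_of_level_lt hlt, h.1 hlt⟩) hlt.le
  · refine iff_of_true (fun hmod => absurd hmod ?_) heq.le
    rw [idealCount_mod_of_level_eq heq.symm]
    exact lowDigit_ne_zero i.succ_pos
  · refine iff_of_false (fun hadv => ?_) hgt.not_ge
    exact Bool.noConfusion <| (h.2 hgt).symm.trans (hadv (idealCount_mod_of_level_lt hgt)).2

end IdealCount

/-- Line `i + 1` of an ideal hierarchy on reaching line `j + 1`. -/
noncomputable def idealSignal (i j : ℕ) (tie : Bool) (s : Lane Z) : Signal Z where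
  digit := ⟨lowDigit (i + 1), lowDigit_lt _⟩
  count := ⟨idealCount i j, Nat.mod_lt _ (by norm_num)⟩
  sample := ⟨(digit i (level (i + 1) + 1) + 1) % 4, Nat.mod_lt _ (by norm_num)⟩
  tie := tie
  gapDigit := ⟨(j + 1) % 4, Nat.mod_lt _ (by norm_num)⟩
  gapSample := ⟨(i + 2) % 4, Nat.mod_lt _ (by norm_num)⟩
  lane := s

section IdealSignal

variable {i j : ℕ} {tie b b' b'' : Bool} {s s' : Lane X} {t : Lane Y}

theorem nextCount_idealSignal (h : FavorsFiner tie i j) :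
    ((idealSignal i j b s).nextCount tie (idealSignal j i b' t) : ℕ) = idealCount i (j + 1) := by
  rw [idealCount_succ, Signal.nextCount]
  simp only [idealSignal, advances_idealCount_iff h]
  split_ifs
  · rw [Fin.val_add, Fin.val_one]
  · rfl

theorem cross_idealSignal (h : FavorsFiner tie i j) :
    (idealSignal i j b s).cross tie (idealSignal j i b' t) b'' s' =
      idealSignal i (j + 1) b'' s' := by
  refine Signal.ext rfl (Fin.ext ?_) rfl rfl (Fin.ext ?_) rfl rfl
  · exact nextCount_idealSignal h
  · simp only [Signal.cross, idealSignal, Fin.val_add, Fin.val_one]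
    omega

theorem midLane_idealSignal (h : FavorsFiner tie i j) (x₀ : X) :
    (idealSignal i j b s).midLane tie x₀ (idealSignal j i b' t) =
      s.enter x₀ (lowDigit (j + 1)) ((digit (i + 1) (level (j + 1)) + 1) % 4) := by
  rw [Signal.midLane, nextCount_idealSignal h.not, idealCount_mod]
  rfl

theorem idealSignal_accepts (h : FavorsFiner tie i j) :
    (idealSignal i j b s).Accepts tie (idealSignal j i b' t) where
  count_mod_eq_digit hrow hcol := by
    have hle := (advances_idealCount_iff h).1 hrow
    have hge := (advances_idealCount_iff h.not).1 hcol
    exact idealCount_mod_of_level_eq (le_antisymm hle hge)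
  sync hcol := idealCount_sync <| not_le.1 fun hle => hcol ((advances_idealCount_iff h.not).2 hle)
  gap hne := by
    rw [nextCount_idealSignal h.not, idealCount_mod, level_of_mod_ne_zero hne, digit_zero]
    exact ⟨lowDigit_of_mod_ne_zero hne, by simp only [idealSignal]; omega⟩

end IdealSignal

section IdealLanes

variable (C : Computation X Y)

/-- The effect of line numbers on the lanes at a crossing of an ideal hierarchy. -/
noncomputable def enterIdeal (i j : ℕ) (p : Lane X × Lane Y) : Lane X × Lane Y :=
  (p.1.enter C.rowInit (lowDigit j) ((digit i (level j) + 1) % 4),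
    p.2.enter C.colInit (lowDigit i) ((digit j (level i) + 1) % 4))

/-- The lanes on reaching the crossing of lines `i` and `j` of an ideal hierarchy. The lines `0` are
added for convenience: they have no effect, because `lowDigit 0 = 0`. -/
noncomputable def idealLanes : ℕ → ℕ → Lane X × Lane Y :=
  sweep .blocked .blocked fun i j p =>
    Lane.interact C.step (enterIdeal C i j p).1 (enterIdeal C i j p).2

theorem laneShape_blocked (i : ℕ) : LaneShape i 0 .blocked :=
  ⟨fun l _ => by rw [digit_of_lt (by positivity)]; exact nofun, fun _ => nofun⟩

theorem enter_zero (x₀ : X) (c : ℕ) (s : Lane X) : s.enter x₀ (lowDigit 0) c = s := by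
  rw [lowDigit, digit_of_lt (by positivity), Lane.enter]
  cases s <;> simp [Lane.mark]

theorem laneSystem_ideal (b : ℕ) : LaneSystem C 0 b
    (fun i j => (enterIdeal C i j (idealLanes C i j)).1)
    (fun i j => (enterIdeal C i j (idealLanes C i j)).2) where
  row_succ _ _ _ _ := by rw [enterIdeal, idealLanes, sweep_fst_succ]
  col_succ _ _ _ _ := by rw [enterIdeal, idealLanes, sweep_snd_succ]
  row_base _ _ := by
    rw [enterIdeal, idealLanes, sweep_fst_zero, enter_zero]
    exact laneShape_blocked _
  col_base _ _ := by
    rw [enterIdeal, idealLanes, sweep_snd_zero, enter_zero]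
    exact laneShape_blocked _

theorem IsHome.exists_zoneStart {i k : ℕ} (h : IsHome i k) (hd : digit i k = 2) :
    ∃ I y, IsZoneStart k I ∧ y < 4 ^ k ∧ Free k y ∧ I + y = i := by
  have hdvd : 4 ^ k ∣ 4 ^ k * (i / 4 ^ k) := dvd_mul_right _ _
  have hlt : i % 4 ^ k < 4 ^ k := Nat.mod_lt _ (by positivity)
  have hsplit := Nat.div_add_mod i (4 ^ k)
  refine ⟨_, _, ⟨hdvd, ?_⟩, hlt, fun l hl => ?_, hsplit⟩
  · rw [← digit_add hdvd hlt, hsplit, hd]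
  · rw [← digit_add_of_lt hdvd hl, hsplit]
    exact h.2 l hl

variable {C}

theorem LaneSystem.not_clash {s : ℕ → ℕ → Lane X} {t : ℕ → ℕ → Lane Y}
    (h : ∀ b, LaneSystem C 0 b s t) (hC : C.Safe) (i j : ℕ) :
    ¬ Lane.Clash C.bad (s i j) (t i j) := by
  intro hclash
  obtain ⟨hs, ht⟩ := hclash.shape_eq
  have hrow := (h (i + j + 1)).row_shape i.zero_le (by omega) j.zero_le (by omega)
  have hcol := (h (i + j + 1)).col_shape i.zero_le (by omega) j.zero_le (by omega)
  rw [hs] at hrow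
  rw [ht] at hcol
  obtain ⟨k, hik, hjk⟩ := hrow.exists_isHome_of_active
  obtain ⟨l, hjl, hil⟩ := hcol.exists_isHome_of_active
  obtain rfl := LaneShape.active_unique hik hjk hjl hil
  obtain ⟨I, y, hI, hy, hfy, rfl⟩ := hik.exists_zoneStart hil
  obtain ⟨J, x, hJ, hx, hfx, rfl⟩ := hjl.exists_zoneStart hjk
  obtain ⟨hs, ht⟩ := (h (I + J + 4 ^ k)).eq_states hI hJ hI.pos (by omega) hJ.pos (by omega) hy hx
  rw [hs hfy, ht hfx] at hclash
  exact Bool.eq_false_iff.1 (hC _ _) hclash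

end IdealLanes

section IdealGrid

/-- The rows of an ideal grid. -/
noncomputable def idealRow (C : Computation X Y) (i j : ℕ) : Signal X :=
  idealSignal i j (decide (DigitLT j (i + 1))) (idealLanes C (i + 1) (j + 1)).1

/-- The columns of an ideal grid. -/
noncomputable def idealCol (C : Computation X Y) (i j : ℕ) : Signal Y :=
  idealSignal j i (decide (DigitLT j i)) (idealLanes C (i + 1) (j + 1)).2

variable (C : Computation X Y) (i j : ℕ)

theorem favorsFiner_idealCol : FavorsFiner (idealCol C i j).tie i j :=
  ⟨fun h => decide_eq_false (digitLT_of_level_lt h).asymm,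
    fun h => decide_eq_true (digitLT_of_level_lt h)⟩

theorem midLanes_ideal : C.midLanes (idealRow C i j) (idealCol C i j) =
    enterIdeal C (i + 1) (j + 1) (idealLanes C (i + 1) (j + 1)) :=
  Prod.ext (midLane_idealSignal (favorsFiner_idealCol C i j) _)
    (midLane_idealSignal (favorsFiner_idealCol C i j).not _)

theorem outLanes_ideal : C.outLanes (idealRow C i j) (idealCol C i j) =
    ((idealLanes C (i + 1) (j + 2)).1, (idealLanes C (i + 2) (j + 1)).2) := by
  rw [Computation.outLanes, midLanes_ideal, idealLanes, sweep_fst_succ, sweep_snd_succ]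

theorem tie_idealRow_succ : (idealRow C i (j + 1)).tie =
    if level (i + 1) ≤ level (j + 1) ∧ level (j + 1) ≤ level (i + 1) then (idealCol C i j).tie
      else decide (level (i + 1) ≤ level (j + 1)) := by
  rcases lt_trichotomy (level (i + 1)) (level (j + 1)) with hlt | heq | hgt
  · rw [if_neg (by omega), decide_eq_true hlt.le]
    exact decide_eq_true (digitLT_succ_of_level_lt hlt)
  · rw [if_pos (by omega)]
    exact decide_eq_decide.2 (digitLT_succ_iff heq.symm)
  · rw [if_neg (by omega), decide_eq_false hgt.not_ge]
    exact decide_eq_false (digitLT_succ_of_level_lt hgt).asymm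

theorem rowOut_ideal : C.rowOut (idealRow C i j) (idealCol C i j) = idealRow C i (j + 1) := by
  have htie := favorsFiner_idealCol C i j
  have hrow : Advances (idealCol C i j).tie (idealRow C i j).count (idealCol C i j).count ↔
      level (i + 1) ≤ level (j + 1) := advances_idealCount_iff htie
  have hcol : Advances (!(idealCol C i j).tie) (idealCol C i j).count (idealRow C i j).count ↔
      level (j + 1) ≤ level (i + 1) := advances_idealCount_iff htie.not
  rw [Computation.rowOut, outLanes_ideal]
  simp only [hrow, hcol, ← tie_idealRow_succ]
  exact cross_idealSignal htie

theorem colOut_ideal : C.colOut (idealRow C i j) (idealCol C i j) = idealCol C (i + 1) j := by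
  rw [Computation.colOut, outLanes_ideal]
  exact cross_idealSignal (favorsFiner_idealCol C i j).not

variable {C}

theorem Computation.Safe.grid (hC : C.Safe) (N : ℕ) : Grid C N (idealRow C) (idealCol C) where
  valid {i j} _ _ :=
    { row := idealSignal_accepts (favorsFiner_idealCol C i j)
      col := idealSignal_accepts (favorsFiner_idealCol C i j).not
      not_clash := by
        rw [midLanes_ideal]
        exact LaneSystem.not_clash (laneSystem_ideal C) hC _ _ }
  row_succ _ _ := (rowOut_ideal C _ _).symm
  col_succ _ _ := (colOut_ideal C _ _).symm

end IdealGrid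

theorem Computation.exists_grid_iff_safe {C : Computation X Y} :
    (∀ N, ∃ H V, Grid C N H V) ↔ C.Safe :=
  ⟨Computation.safe_of_grids, fun hC N => ⟨_, _, hC.grid N⟩⟩

end IdealArray

/-! ### Counter programs and Turing machines -/

section Machine

variable {X Y P Q Γ Λ : Type*}

/-- The operations of a `CounterProgram` on its counter. -/
inductive CounterOp where
  | keep
  | reset
  | increment

/-- The effect of an operation on a counter bounded by `n`. -/
def CounterOp.eval (n : ℕ) : CounterOp → Fin (n + 1) → Fin (n + 1)
  | keep, k => k
  | reset, _ => 0
  | increment, k => ⟨min (k + 1) n, by omega⟩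

/-- A computation in which every row carries, besides its state, a counter bounded by a parameter
`n`. The Boolean argument of `step` tells whether the counter is less than `n`; this is the only
way in which the program depends on `n`. -/
structure CounterProgram (P Q : Type*) where
  rowInit : P
  colInit : Q
  step : Bool → P → Q → (P × CounterOp) × Q
  bad : P → Q → Bool

/-- The computation of a program with counter bound `n`. -/
def CounterProgram.run (S : CounterProgram P Q) (n : ℕ) : Computation (P × Fin (n + 1)) Q where
  rowInit := (S.rowInit, 0)
  colInit := S.colInit
  step x y :=
    let r := S.step (decide ((x.2 : ℕ) < n)) x.1 y
    ((r.1.1, r.1.2.eval n x.2), r.2)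
  bad x y := S.bad x.1 y

namespace Computation

variable (C : Computation X Y) (i j : ℕ)

theorem states_fst_zero : (C.states i 0).1 = C.rowInit := sweep_fst_zero _ _ _ _

theorem states_snd_zero : (C.states 0 j).2 = C.colInit := sweep_snd_zero _ _ _ _

theorem states_fst_succ :
    (C.states i (j + 1)).1 = (C.step (C.states i j).1 (C.states i j).2).1 :=
  sweep_fst_succ _ _ _ _ _

theorem states_snd_succ :
    (C.states (i + 1) j).2 = (C.step (C.states i j).1 (C.states i j).2).2 :=
  sweep_snd_succ _ _ _ _ _

end Computation

/-- A cell of a tape: its symbol, and the state of the machine if the head is there. -/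
abbrev TapeCell (Γ Λ : Type*) := Γ × Option Λ

/-- An empty cell without the head. -/
def blankCell [Inhabited Γ] : TapeCell Γ Λ := (default, none)

section CellAt

variable [Inhabited Γ]

/-- The cell at position `q` of a configuration whose head is at position `p`. -/
def cellAt (c : TM0.Cfg Γ Λ) (p q : ℤ) : TapeCell Γ Λ :=
  (c.Tape.nth (q - p), if q = p then some c.q else none)

theorem cellAt_self (c : TM0.Cfg Γ Λ) (p : ℤ) : cellAt c p p = (c.Tape.head, some c.q) := by
  simp [cellAt]

theorem cellAt_of_ne (c : TM0.Cfg Γ Λ) {p q : ℤ} (h : q ≠ p) :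
    cellAt c p q = (c.Tape.nth (q - p), none) := by
  simp [cellAt, h]

end CellAt

/-- The movement of the head in a step of a machine. -/
def displacement : TM0.Stmt Γ → ℤ
  | .move .left => -1
  | .move .right => 1
  | .write _ => 0

theorem neg_one_le_displacement (a : TM0.Stmt Γ) : -1 ≤ displacement a := by
  rcases a with (_ | _) | _ <;> simp [displacement]

/-- The effect of a statement on the tape. -/
def applyStmt [Inhabited Γ] : TM0.Stmt Γ → Tape Γ → Tape Γ
  | .move d, T => T.move d
  | .write b, T => T.write b

section LocalRule

variable [Inhabited Λ] (M : TM0.Machine Γ Λ)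

/-- The new state of a machine whose head leaves the given cell in direction `d`. -/
def headMoving (d : Dir) (a : TapeCell Γ Λ) : Option Λ :=
  match a.2.bind fun q => M q a.1 with
  | some (q, .move d') => if d' = d then some q else none
  | _ => none

/-- The content of a cell after a step of the machine, in terms of its left neighbour, its own
content, and its right neighbour. -/
def nextCell (l a r : TapeCell Γ Λ) : TapeCell Γ Λ :=
  match a.2 with
  | some q => match M q a.1 with
    | some (q', .write b) => (b, some q')
    | _ => (a.1, none)
  | none => (a.1, (headMoving M .right l).or (headMoving M .left r))

variable [Inhabited Γ]

theorem headMoving_cellAt (d : Dir) (c : TM0.Cfg Γ Λ) (p q : ℤ) : headMoving M d (cellAt c p q) =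
    if q = p then headMoving M d (c.Tape.head, some c.q) else none := by
  split_ifs with h
  · rw [h, cellAt_self]
  · rw [cellAt_of_ne _ h]
    rfl

theorem step_eq_some_iff {M : TM0.Machine Γ Λ} {c c' : TM0.Cfg Γ Λ} :
    TM0.step M c = some c' ↔ ∃ a, M c.q c.Tape.head = some (c'.q, a) ∧
      c'.Tape = applyStmt a c.Tape := by
  obtain ⟨q, T⟩ := c
  obtain ⟨q', T'⟩ := c'
  simp only [TM0.step, Option.map_eq_some_iff, Prod.exists, TM0.Cfg.mk.injEq]
  constructor
  · rintro ⟨_, a, hM, rfl, rfl⟩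
    exact ⟨a, hM, by cases a <;> rfl⟩
  · rintro ⟨a, hM, rfl⟩
    exact ⟨q', a, hM, rfl, by cases a <;> rfl⟩

theorem cellAt_step {c c' : TM0.Cfg Γ Λ} {a : TM0.Stmt Γ} (hM : M c.q c.Tape.head = some (c'.q, a))
    (hT : c'.Tape = applyStmt a c.Tape) (p q : ℤ) : cellAt c' (p + displacement a) q =
      nextCell M (cellAt c p (q - 1)) (cellAt c p q) (cellAt c p (q + 1)) := by
  by_cases hq : q = p
  · subst hq
    rw [cellAt_self, nextCell, cellAt, hT]
    rcases a with (_ | _) | b <;> simp [hM, displacement, applyStmt, Tape.write]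
  · have hq' : q - p ≠ 0 := sub_ne_zero.2 hq
    rw [cellAt_of_ne _ hq, nextCell, headMoving_cellAt, headMoving_cellAt, cellAt, hT,
      ← sub_sub]
    rcases a with (_ | _) | b
    · simp [displacement, headMoving, hM, applyStmt, eq_add_neg_iff_add_eq]
    · simp [displacement, headMoving, hM, applyStmt, ← sub_eq_iff_eq_add]
    · simp [displacement, headMoving, hM, applyStmt, hq, hq']

end LocalRule

/-- The row states of `simulate`. Row `0` writes a word on the tape, passing through the states
`start`, `second`, `rest` and `blank`. Every other row performs a step of the machine; in the state
`scan a b` it has met the cells `a` and `b` last. -/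
inductive RowState (A : Type*) where
  | start
  | second
  | rest
  | blank
  | scan (a b : A)

section Simulate

variable [Inhabited Γ] [Inhabited Λ] (M : TM0.Machine Γ Λ) (q₀ : Λ) (c₀ c₁ c₂ : Γ)

/-- The program simulating `M` on the input `c₀ c₁ c₂ⁿ`. The columns carry the cells of the tape.
As a row knows the right neighbour of a cell only one column later, the tape is shifted by one
column in each step. -/
def simulate : CounterProgram (RowState (TapeCell Γ Λ)) (Option (TapeCell Γ Λ)) where
  rowInit := .start
  colInit := none
  step
    | _, .start, none => ((.second, .reset), some (c₀, some q₀))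
    | _, .second, none => ((.rest, .reset), some (c₁, none))
    | true, .rest, none => ((.rest, .increment), some (c₂, none))
    | _, .start, some r =>
      ((.scan blankCell r, .reset), some (nextCell M blankCell blankCell r))
    | _, .scan l a, some r => ((.scan a r, .reset), some (nextCell M l a r))
    | _, _, _ => ((.blank, .reset), some blankCell)
  bad
    | _, some (a, some q) => (M q a).isNone
    | _, _ => false

variable (n : ℕ)

theorem simulate_row_zero_rest {t : ℕ} (ht : t ≤ n) :
    (((simulate M q₀ c₀ c₁ c₂).run n).states 0 (t + 2)).1 = (.rest, Fin.ofNat (n + 1) t) := by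
  induction t with
  | zero =>
    simp [Computation.states_fst_succ, Computation.states_fst_zero, Computation.states_snd_zero,
      CounterProgram.run, simulate, CounterOp.eval]
  | succ t ih =>
    have hmod : t % (n + 1) = t := Nat.mod_eq_of_lt (by omega)
    rw [Computation.states_fst_succ, ih (by omega), Computation.states_snd_zero]
    simp [CounterProgram.run, simulate, CounterOp.eval, Fin.ext_iff, hmod,
      Nat.lt_of_succ_le ht, Nat.mod_eq_of_lt (Nat.lt_succ_of_le ht), ht]

theorem simulate_row_zero_blank {t : ℕ} (ht : n < t) :
    (((simulate M q₀ c₀ c₁ c₂).run n).states 0 (t + 2)).1 = (.blank, 0) := by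
  induction t, ht using Nat.le_induction with
  | base =>
    rw [Computation.states_fst_succ, simulate_row_zero_rest _ _ _ _ _ _ le_rfl,
      Computation.states_snd_zero]
    simp [CounterProgram.run, simulate, CounterOp.eval]
  | succ t _ ih =>
    rw [Computation.states_fst_succ, ih, Computation.states_snd_zero]
    simp [CounterProgram.run, simulate, CounterOp.eval]

theorem simulate_col_one (t : ℕ) :
    (((simulate M q₀ c₀ c₁ c₂).run n).states 1 t).2 =
      some ((c₀ :: c₁ :: List.replicate n c₂).getI t, if t = 0 then some q₀ else none) := by
  rw [Computation.states_snd_succ, Computation.states_snd_zero]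
  rcases t with _ | _ | t
  · simp [Computation.states_fst_zero, CounterProgram.run, simulate]
  · simp [Computation.states_fst_succ, Computation.states_fst_zero, Computation.states_snd_zero,
      CounterProgram.run, simulate]
  · rcases lt_trichotomy t n with h | rfl | h
    · rw [simulate_row_zero_rest _ _ _ _ _ _ h.le]
      simp [CounterProgram.run, simulate, Nat.mod_eq_of_lt (Nat.lt_succ_of_lt h), h,
        List.getI_eq_getElem]
    · rw [simulate_row_zero_rest _ _ _ _ _ _ le_rfl]
      simp [CounterProgram.run, simulate, List.getI_eq_default, blankCell]
    · rw [simulate_row_zero_blank _ _ _ _ _ _ h]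
      simp [CounterProgram.run, simulate, List.getI_eq_default, h.le, blankCell]

end Simulate

/-- The initial configuration of a machine on the input `c₀ c₁ c₂ⁿ`. -/
def initCfg [Inhabited Γ] (q₀ : Λ) (c₀ c₁ c₂ : Γ) (n : ℕ) : TM0.Cfg Γ Λ :=
  ⟨q₀, Tape.mk₁ (c₀ :: c₁ :: List.replicate n c₂)⟩

section Displays

variable [Inhabited Γ] [Inhabited Λ] {M : TM0.Machine Γ Λ}

/-- The columns entering row `s + 1` of a computation display the configuration `c`, with position
`0` of the tape in column `s`. -/
structure Displays (C : Computation X (Option (TapeCell Γ Λ))) (s : ℕ) (c : TM0.Cfg Γ Λ) (p : ℤ) :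
    Prop where
  neg_le : -s ≤ p
  blank : ∀ q : ℤ, q < -s → cellAt c p q = blankCell
  cell : ∀ t : ℕ, (C.states (s + 1) t).2 = some (cellAt c p (t - s))

variable {q₀ : Λ} {c₀ c₁ c₂ : Γ} {n s : ℕ} {c c' : TM0.Cfg Γ Λ} {p : ℤ}

theorem displays_init : Displays ((simulate M q₀ c₀ c₁ c₂).run n) 0
    (initCfg q₀ c₀ c₁ c₂ n) 0 where
  neg_le := by simp
  blank q hq := by
    rw [initCfg]
    obtain ⟨k, rfl⟩ := Int.eq_negSucc_of_lt_zero (by simpa using hq)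
    simp [cellAt, Tape.mk₁, Tape.mk₂, Tape.mk', Tape.nth, blankCell]
  cell t := by
    rw [simulate_col_one, initCfg]
    simp [cellAt, Tape.mk₁, Tape.mk₂]

theorem Displays.row (h : Displays ((simulate M q₀ c₀ c₁ c₂).run n) s c p) (t : ℕ) :
    (((simulate M q₀ c₀ c₁ c₂).run n).states (s + 1) (t + 1)).1.1 =
      .scan (cellAt c p (t - s - 1)) (cellAt c p (t - s)) := by
  induction t with
  | zero =>
    rw [Computation.states_fst_succ, Computation.states_fst_zero, h.cell,
      h.blank (_ - 1) (by push_cast; omega)]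
    simp [CounterProgram.run, simulate]
  | succ t ih =>
    rw [Computation.states_fst_succ, h.cell]
    simp only [CounterProgram.run, simulate] at ih ⊢
    rw [ih]
    simp
    ring_nf

theorem Displays.next (h : Displays ((simulate M q₀ c₀ c₁ c₂).run n) s c p) (t : ℕ) :
    (((simulate M q₀ c₀ c₁ c₂).run n).states (s + 2) t).2 =
      some (nextCell M (cellAt c p (t - s - 2)) (cellAt c p (t - s - 1)) (cellAt c p (t - s))) := by
  rw [Computation.states_snd_succ, h.cell]
  rcases t with _ | t
  · rw [Computation.states_fst_zero, h.blank (_ - 2) (by push_cast; omega),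
      h.blank (_ - 1) (by push_cast; omega)]
    simp [CounterProgram.run, simulate]
  · have hrow := h.row t
    simp only [CounterProgram.run, simulate] at hrow ⊢
    rw [hrow]
    simp
    ring_nf

theorem Displays.step (h : Displays ((simulate M q₀ c₀ c₁ c₂).run n) s c p)
    (hc : TM0.step M c = some c') :
    ∃ p', Displays ((simulate M q₀ c₀ c₁ c₂).run n) (s + 1) c' p' := by
  obtain ⟨a, hM, hT⟩ := step_eq_some_iff.1 hc
  have hdisp := neg_one_le_displacement a
  have hp := h.neg_le
  refine ⟨p + displacement a, by push_cast; omega, fun q hq => ?_, fun t => ?_⟩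
  · push_cast at hq
    have hblank : (cellAt c' (p + displacement a) q).1 = default := by
      rw [cellAt_step M hM hT, h.blank q (by omega), h.blank (q - 1) (by omega)]
      rfl
    rw [cellAt_of_ne _ (by omega)] at hblank ⊢
    exact Prod.ext hblank rfl
  · rw [h.next, cellAt_step M hM hT]
    push_cast
    ring_nf

theorem simulate_bad_cellAt (x : RowState (TapeCell Γ Λ) × Fin (n + 1)) (q : ℤ) :
    ((simulate M q₀ c₀ c₁ c₂).run n).bad x (some (cellAt c p q)) = true ↔
      q = p ∧ TM0.step M c = none := by
  by_cases hq : q = p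
  · subst hq
    simp [cellAt_self, CounterProgram.run, simulate, TM0.step]
  · simp [cellAt_of_ne _ hq, CounterProgram.run, simulate, hq]

end Displays

section Halting

variable [Inhabited Γ] [Inhabited Λ] {M : TM0.Machine Γ Λ} {q₀ : Λ} {c₀ c₁ c₂ : Γ} {n : ℕ}

theorem exists_displays_of_reaches {c : TM0.Cfg Γ Λ}
    (h : StateTransition.Reaches (TM0.step M) (initCfg q₀ c₀ c₁ c₂ n) c) :
    ∃ s p, Displays ((simulate M q₀ c₀ c₁ c₂).run n) s c p := by
  induction h with
  | refl => exact ⟨0, 0, displays_init⟩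
  | tail _ hstep ih =>
    obtain ⟨s, p, hs⟩ := ih
    exact ⟨s + 1, hs.step hstep⟩

theorem exists_displays_of_not_dom
    (h : ¬ (StateTransition.eval (TM0.step M) (initCfg q₀ c₀ c₁ c₂ n)).Dom) (s : ℕ) :
    ∃ c p, TM0.step M c ≠ none ∧ Displays ((simulate M q₀ c₀ c₁ c₂).run n) s c p := by
  have hne {c : TM0.Cfg Γ Λ}
      (hc : StateTransition.Reaches (TM0.step M) (initCfg q₀ c₀ c₁ c₂ n) c) :
      TM0.step M c ≠ none :=
    fun hstep => h (Part.dom_iff_mem.2 ⟨c, StateTransition.mem_eval.2 ⟨hc, hstep⟩⟩)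
  suffices ∃ c p, StateTransition.Reaches (TM0.step M) (initCfg q₀ c₀ c₁ c₂ n) c ∧
      Displays ((simulate M q₀ c₀ c₁ c₂).run n) s c p by
    obtain ⟨c, p, hc, hs⟩ := this
    exact ⟨c, p, hne hc, hs⟩
  induction s with
  | zero => exact ⟨_, 0, .refl, displays_init⟩
  | succ s ih =>
    obtain ⟨c, p, hc, hs⟩ := ih
    obtain ⟨c', hc'⟩ := Option.ne_none_iff_exists'.1 (hne hc)
    obtain ⟨p', hs'⟩ := hs.step hc'
    exact ⟨c', p', hc.tail hc', hs'⟩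

theorem eval_dom_iff_not_safe :
    (StateTransition.eval (TM0.step M) (initCfg q₀ c₀ c₁ c₂ n)).Dom ↔
      ¬ ((simulate M q₀ c₀ c₁ c₂).run n).Safe := by
  constructor
  · rintro hdom hsafe
    obtain ⟨c, hc⟩ := Part.dom_iff_mem.1 hdom
    obtain ⟨hreach, hhalt⟩ := StateTransition.mem_eval.1 hc
    obtain ⟨s, p, hs⟩ := exists_displays_of_reaches hreach
    have hp := hs.neg_le
    have hbad := hsafe (s + 1) (p + s).toNat
    rw [hs.cell, ← Bool.not_eq_true, simulate_bad_cellAt] at hbad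
    exact hbad ⟨by omega, hhalt⟩
  · contrapose!
    rintro hdom (_ | s) t
    · rw [Computation.states_snd_zero]
      rfl
    · obtain ⟨c, p, hc, hs⟩ := exists_displays_of_not_dom hdom s
      rw [hs.cell, ← Bool.not_eq_true, simulate_bad_cellAt]
      exact fun h => hc h.2

end Halting

end Machine

/-! ### An undecidable halting problem -/

section Restrict

variable {Γ Λ : Type*} [Inhabited Γ] [Inhabited Λ] (M : TM0.Machine Γ Λ) (S : Set Λ) [Inhabited S]
  (hS : ∀ {q a q' s}, (q', s) ∈ M q a → q ∈ S → q' ∈ S)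

/-- The restriction of a machine to a set of states that is closed under its transitions. -/
def restrictMachine : TM0.Machine Γ S := fun q a =>
  (M q a).pmap (fun r hr => (⟨r.1, hr⟩, r.2)) fun _ hr => hS hr q.2

theorem respects_restrictMachine :
    StateTransition.Respects (TM0.step (restrictMachine M S hS)) (TM0.step M)
      fun c c' => (⟨c.q, c.Tape⟩ : TM0.Cfg Γ Λ) = c' := by
  rintro ⟨q, T⟩ _ rfl
  rcases h : M q T.1 with _ | ⟨q', s⟩
  · simp [TM0.step, restrictMachine, h]
  · have hr : restrictMachine M S hS q T.1 = some (⟨q', hS h q.2⟩, s) := by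
      simp [restrictMachine, h]
    simp only [TM0.step, hr, Option.map_some]
    exact ⟨_, rfl, .single (by simp only [Option.mem_def, TM0.step, h, Option.map_some])⟩

theorem eval_restrictMachine_dom (q : S) (T : Tape Γ) :
    (StateTransition.eval (TM0.step (restrictMachine M S hS)) ⟨q, T⟩).Dom ↔
      (StateTransition.eval (TM0.step M) ⟨q, T⟩).Dom :=
  (StateTransition.tr_eval_dom (respects_restrictMachine M S hS) rfl).symm

end Restrict

theorem tm0_eval_dom_iff_tm2 {K : Type*} [DecidableEq K] {Γ : K → Type*} {Λ σ : Type*}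
    [Inhabited Λ] [Inhabited σ] (M : Λ → TM2.Stmt Γ Λ σ) (k : K) (l : List (Γ k)) :
    (StateTransition.eval (TM0.step (TM1to0.tr (TM2to1.tr M)))
      (TM0.init (TM2to1.trInit k l))).Dom ↔
      (StateTransition.eval (TM2.step M) (TM2.init k l)).Dom := by
  have h₁ := congrArg Part.Dom (TM1to0.tr_eval (TM2to1.tr M) (TM2to1.trInit k l))
  exact (iff_of_eq h₁).trans (TM2to1.tr_eval_dom M k l)

section PowersOfTwo

open PartrecToTM2

theorem exists_trPosNum_two_pow (n : ℕ) : ∃ p : PosNum, ((2 ^ n : ℕ) : Num) = Num.pos p ∧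
    trPosNum p = List.replicate n Γ'.bit0 ++ [Γ'.bit1] := by
  induction n with
  | zero => exact ⟨PosNum.one, rfl, rfl⟩
  | succ n ih =>
    obtain ⟨p, hp, htr⟩ := ih
    refine ⟨PosNum.bit0 p, ?_, ?_⟩
    · rw [pow_succ, mul_comm, two_mul, Nat.cast_add, hp, Num.bit0_of_bit0]
      rfl
    · simp [trPosNum, htr, List.replicate_succ]

theorem reverse_trList_two_pow (n : ℕ) :
    (trList [2 ^ n]).reverse = Γ'.cons :: Γ'.bit1 :: List.replicate n Γ'.bit0 := by
  obtain ⟨p, hp, htr⟩ := exists_trPosNum_two_pow n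
  simp [trList, trNat, hp, trNum, htr]

theorem finite_stackName : Finite K' :=
  .of_injective (β := Fin 4) (fun | .main => 0 | .rev => 1 | .aux => 2 | .stack => 3) <| by
    rintro ⟨⟩ ⟨⟩ <;> simp

/-- The combined symbol of the tape encoding the four stacks that holds `a` on the main stack and
nothing on the others; the flag marks the bottom of the stacks. -/
def mainSymbol (bottom : Bool) (a : Γ') : TM2to1.Γ' K' fun _ => Γ' :=
  (bottom, Function.update (fun _ => none) K'.main (some a))

theorem trInit_two_pow (n : ℕ) :
    TM2to1.trInit (Γ := fun _ => Γ') K'.main (trList [2 ^ n]) =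
      mainSymbol true .cons :: mainSymbol false .bit1 ::
        List.replicate n (mainSymbol false .bit0) := by
  rw [TM2to1.trInit, reverse_trList_two_pow, ← List.map_replicate]
  rfl

end PowersOfTwo

theorem exists_computable_log_two : ∃ l : ℕ → ℕ, Computable l ∧ ∀ n, l (2 ^ n) = n := by
  refine ⟨fun m => m.findGreatest fun k => 2 ^ k = m, ?_, fun n => ?_⟩
  · have hpow : Primrec₂ fun a b : ℕ => a ^ b := Primrec₂.unpaired'.1 Nat.Primrec.pow
    have hrel : PrimrecRel fun m k : ℕ => 2 ^ k = m :=
      Primrec.eq.comp (hpow.comp (Primrec.const 2) Primrec.snd) Primrec.fst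
    exact (Primrec.nat_findGreatest Primrec.id hrel).to_comp
  · exact Nat.pow_right_injective le_rfl
      (Nat.findGreatest_spec (P := fun k => 2 ^ k = 2 ^ n) Nat.lt_two_pow_self.le rfl)

theorem exists_code_not_computablePred_eval_two_pow :
    ∃ c : ToPartrec.Code, ¬ ComputablePred fun n : ℕ => (c.eval [2 ^ n]).Dom := by
  obtain ⟨l, hl, hl_pow⟩ := exists_computable_log_two
  let f : ℕ →. ℕ := fun m => (Denumerable.ofNat Nat.Partrec.Code (l m)).eval 0
  have hf : Partrec f := Nat.Partrec.Code.eval_part.comp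
    ((Computable.ofNat Nat.Partrec.Code).comp hl) (Computable.const 0)
  obtain ⟨c, hc⟩ := ToPartrec.Code.exists_code (Nat.Partrec'.part_iff₁.2 hf)
  have hdom : ∀ n, (c.eval [2 ^ n]).Dom ↔
      ((Denumerable.ofNat Nat.Partrec.Code n).eval 0).Dom := by
    intro n
    have : c.eval [2 ^ n] = pure <$> f (2 ^ n) := hc (2 ^ n ::ᵥ List.Vector.nil)
    simp [this, f, hl_pow]
  refine ⟨c, fun h => ComputablePred.halting_problem 0 ?_⟩
  obtain ⟨g, hg, hgc⟩ := ComputablePred.computable_iff.1 h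
  refine ComputablePred.computable_iff.2 ⟨_, hg.comp Computable.encode, funext fun d => ?_⟩
  simpa only [hdom, Denumerable.ofNat_encode] using congrFun hgc (Encodable.encode d)

theorem exists_machine_not_computablePred_eval :
    ∃ (Γ Λ : Type) (_ : Inhabited Γ) (_ : Inhabited Λ) (_ : Finite Γ) (_ : Finite Λ)
      (M : TM0.Machine Γ Λ) (q₀ : Λ) (c₀ c₁ c₂ : Γ),
      ¬ ComputablePred fun n =>
        (StateTransition.eval (TM0.step M) (initCfg q₀ c₀ c₁ c₂ n)).Dom := by
  obtain ⟨c, hc⟩ := exists_code_not_computablePred_eval_two_pow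
  let start : Inhabited PartrecToTM2.Λ' := ⟨PartrecToTM2.trNormal c .halt⟩
  have supp := TM1to0.tr_supports _
    (TM2to1.tr_supports (M := PartrecToTM2.tr) (PartrecToTM2.tr_supports c .halt))
  set S := TM1to0.trStmts (TM2to1.tr PartrecToTM2.tr) _
  let _ : Inhabited (S : Set (TM1to0.Λ' (TM2to1.tr PartrecToTM2.tr))) := ⟨⟨default, supp.1⟩⟩
  have := finite_stackName
  refine ⟨TM2to1.Γ' PartrecToTM2.K' fun _ => PartrecToTM2.Γ', _, inferInstance, inferInstance,
    inferInstanceAs (Finite (Bool × (PartrecToTM2.K' → Option PartrecToTM2.Γ'))),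
    Finset.finite_toSet S,
    restrictMachine (TM1to0.tr (TM2to1.tr PartrecToTM2.tr)) _ supp.2, default,
    mainSymbol true .cons, mainSymbol false .bit1, mainSymbol false .bit0, ?_⟩
  convert hc using 3 with n
  have hinit : PartrecToTM2.init c [2 ^ n] =
      TM2.init PartrecToTM2.K'.main (PartrecToTM2.trList [2 ^ n]) := by
    rw [PartrecToTM2.init, TM2.init]
    congr 1
    funext k
    cases k <;> rfl
  rw [initCfg, eval_restrictMachine_dom, ← trInit_two_pow]
  refine (tm0_eval_dom_iff_tm2 PartrecToTM2.tr _ _).trans ?_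
  rw [← hinit, PartrecToTM2.tr_eval]
  rfl

/-! ### Cellular automata -/

section Spread

variable {A B : Type*}

/-- The local rule of radius one whose cells are empty or hold an element of `A`: a cell becomes
`f a b` where `b` is its content and `a` that of its left neighbour. The state `none`, which
stands for an empty cell or an undefined value, is made to spread. -/
def spreadRule (f : A → A → Option A) (u : Fin (2 * 1 + 1) → Option A) : Option A :=
  (u 0).bind fun a => (u 1).bind fun b => (u 2).bind fun _ => f a b

theorem spreadingRule_spreadRule (f : A → A → Option A) : SpreadingRule (spreadRule f) none := by
  rintro u ⟨j, hj⟩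
  fin_cases j <;> simp_all [spreadRule]

variable {f : A → A → Option A} {g : B → B → Option B} {π : A → B}

theorem map_spreadRule (hfg : ∀ a b, (f a b).map π = g (π a) (π b))
    (u : Fin (2 * 1 + 1) → Option A) :
    (spreadRule f u).map π = spreadRule g (Option.map π ∘ u) := by
  simp only [spreadRule, Function.comp_apply]
  cases u 0 <;> cases u 1 <;> cases u 2 <;> simp [hfg]

theorem nilpotent_spreadRule_iff_of_factor (hπ : Function.Surjective π)
    (hfg : ∀ a b, (f a b).map π = g (π a) (π b)) :
    Nilpotent (caMap 1 (spreadRule f)) ↔ Nilpotent (caMap 1 (spreadRule g)) :=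
  (spreadingRule_spreadRule f).nilpotent_iff_of_factor
    (fun b => ⟨b.map (Function.surjInv hπ), by simp [Function.comp_def, Function.surjInv_eq]⟩)
    (map_spreadRule hfg) fun _ => by simp

theorem caMap_spreadRule_eq_some {x : Config (Option A)} {p : ℤ} {c : A} :
    caMap 1 (spreadRule f) x p = some c ↔
      ∃ a b, x (p - 1) = some a ∧ x p = some b ∧ x (p + 1) ≠ none ∧ f a b = some c := by
  have h₀ : p - ((1 : ℕ) : ℤ) + ((0 : Fin (2 * 1 + 1)) : ℕ) = p - 1 := by simp
  have h₁ : p - ((1 : ℕ) : ℤ) + ((1 : Fin (2 * 1 + 1)) : ℕ) = p := by simp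
  have h₂ : p - ((1 : ℕ) : ℤ) + ((2 : Fin (2 * 1 + 1)) : ℕ) = p + 1 := by
    rw [show ((2 : Fin (2 * 1 + 1)) : ℕ) = 2 from rfl]
    push_cast
    ring
  simp only [caMap, spreadRule, h₀, h₁, h₂]
  cases x (p - 1) <;> cases x p <;> cases x (p + 1) <;> simp

/-- An array of size `N` in which the entry `(i + 1, j + 1)` is computed by `f` from the entries
`(i + 1, j)` and `(i, j + 1)`. -/
def IsArray (f : A → A → Option A) (N : ℕ) (D : ℕ → ℕ → A) : Prop :=
  ∀ i j, i < N → j < N → f (D (i + 1) j) (D i (j + 1)) = some (D (i + 1) (j + 1))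

theorem isArray_of_iterate_ne_none {N : ℕ} {x : Config (Option A)} {p : ℤ}
    (h : (caMap 1 (spreadRule f))^[2 * N] x p ≠ none) : ∃ D, IsArray f N D := by
  have hdef : ∀ i j, i ≤ N → j ≤ N →
      ∃ a, (caMap 1 (spreadRule f))^[i + j] x (p - N + j) = some a := by
    intro i j hi hj
    rw [← Option.ne_none_iff_exists']
    intro hnone
    have := (spreadingRule_spreadRule f).iterate_caMap_eq (p := p) (d := 2 * N - (i + j)) hnone
      (by rw [abs_le]; omega)
    rw [Nat.add_sub_of_le (by omega)] at this
    exact h this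
  have : Nonempty A := ⟨(hdef 0 0 N.zero_le N.zero_le).choose⟩
  choose! D hD using hdef
  refine ⟨D, fun i j hi hj => ?_⟩
  have hstep := hD (i + 1) (j + 1) hi hj
  rw [← Nat.add_assoc, Function.iterate_succ_apply', caMap_spreadRule_eq_some] at hstep
  obtain ⟨a, b, ha, hb, -, hab⟩ := hstep
  rw [Nat.cast_succ, ← add_assoc, add_sub_cancel_right, hD (i + 1) j hi hj.le] at ha
  rw [add_right_comm, add_assoc, hD i (j + 1) hi.le hj] at hb
  rwa [Option.some.inj ha, Option.some.inj hb]

theorem IsArray.iterate_eq_some {J : ℕ} {D : ℕ → ℕ → A} (hD : IsArray f (2 * J + 1) D) (t p : ℕ)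
    (htp : t ≤ p) (hp : p + t ≤ 2 * J) :
    (caMap 1 (spreadRule f))^[t] (fun q => some (D (2 * J - q.toNat) q.toNat)) p =
      some (D (2 * J + t - p) p) := by
  induction t generalizing p with
  | zero => simp
  | succ t ih =>
    obtain ⟨p, rfl⟩ := Nat.exists_eq_add_one.2 (show 0 < p by omega)
    obtain ⟨i, hi⟩ : ∃ i, 2 * J + t = i + 1 + p := ⟨2 * J + t - (p + 1), by omega⟩
    have hleft := ih p (by omega) (by omega)
    have hmid := ih (p + 1) (by omega) (by omega)
    have hright := ih (p + 2) (by omega) (by omega)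
    rw [show 2 * J + t - p = i + 1 by omega] at hleft
    rw [show 2 * J + t - (p + 1) = i by omega] at hmid
    rw [Function.iterate_succ_apply', caMap_spreadRule_eq_some,
      show 2 * J + (t + 1) - (p + 1) = i + 1 by omega]
    refine ⟨_, _, ?_, hmid, ?_, hD i p (by omega) (by omega)⟩
    · rwa [Nat.cast_succ, add_sub_cancel_right]
    · rw [← Nat.cast_succ, hright]
      exact Option.some_ne_none _

theorem nilpotent_spreadRule_iff :
    Nilpotent (caMap 1 (spreadRule f)) ↔ ¬ ∀ N, ∃ D, IsArray f N D := by
  rw [(spreadingRule_spreadRule f).nilpotent_iff]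
  constructor
  · rintro ⟨J, hJ⟩ h
    obtain ⟨D, hD⟩ := h (2 * J + 1)
    have := hD.iterate_eq_some J J le_rfl (by omega)
    simp [hJ] at this
  · contrapose!
    intro h N
    obtain ⟨x, p, hxp⟩ := h (2 * N)
    exact isArray_of_iterate_ne_none hxp

end Spread

namespace Computation

variable {X Y : Type*}

open Classical in
/-- The pair of signals leaving a crossing, if the crossing is valid. -/
noncomputable def crossing (C : Computation X Y) (h : Signal X) (v : Signal Y) :
    Option (Signal X × Signal Y) :=
  if C.Valid h v then some (C.rowOut h v, C.colOut h v) else none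

theorem crossing_eq_some {C : Computation X Y} {h : Signal X} {v : Signal Y}
    {r : Signal X × Signal Y} :
    C.crossing h v = some r ↔ C.Valid h v ∧ r.1 = C.rowOut h v ∧ r.2 = C.colOut h v := by
  simp [crossing, Prod.ext_iff, eq_comm]

theorem exists_isArray_iff_exists_grid {C : Computation X Y} {N : ℕ} :
    (∃ D, IsArray (fun a b => C.crossing a.1 b.2) N D) ↔ ∃ H V, Grid C N H V := by
  simp only [IsArray, crossing_eq_some]
  constructor
  · rintro ⟨D, hD⟩
    exact ⟨fun i j => (D (i + 1) j).1, fun i j => (D i (j + 1)).2,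
      fun hi hj => (hD _ _ hi hj).1, fun hi hj => (hD _ _ hi hj).2.1,
      fun hi hj => (hD _ _ hi hj).2.2⟩
  · rintro ⟨H, V, hG⟩
    exact ⟨fun i j => (H (i - 1) j, V i (j - 1)), fun i j hi hj =>
      ⟨hG.valid hi hj, hG.row_succ hi hj, hG.col_succ hi hj⟩⟩

theorem nilpotent_crossing_iff {C : Computation X Y} :
    Nilpotent (caMap 1 (spreadRule fun a b => C.crossing a.1 b.2)) ↔ ¬ C.Safe := by
  simp only [nilpotent_spreadRule_iff, exists_isArray_iff_exists_grid, exists_grid_iff_safe]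

end Computation

/-! ### Finite tables for counter programs -/

section Table

variable {X X' Y P Q Γ Λ : Type*}

/-- The state of an active lane, if any, belongs to `G`. -/
def Lane.StateIn (G : Set X) : Lane X → Prop
  | active x => x ∈ G
  | _ => True

theorem Lane.StateIn.enter {G : Set X} {x₀ : X} (hx₀ : x₀ ∈ G) {s : Lane X} (hs : s.StateIn G)
    (d c : ℕ) : (s.enter x₀ d c).StateIn G := by
  unfold Lane.enter
  split_ifs
  · rcases d with _ | _ | _ | _ | d <;> cases s <;> first | exact hs | exact hx₀ | trivial
  · exact hs

/-- Apply a function to the state of the lane of a signal. -/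
def Signal.map (f : X → X') (h : Signal X) : Signal X' where
  digit := h.digit
  count := h.count
  sample := h.sample
  tie := h.tie
  gapDigit := h.gapDigit
  gapSample := h.gapSample
  lane := h.lane.map f

theorem Signal.map_map {X'' : Type*} (f : X → X') (g : X' → X'') (h : Signal X) :
    (h.map f).map g = h.map (g ∘ f) := by
  rcases h with ⟨_, _, _, _, _, _, _ | _ | _⟩ <;> rfl

namespace Computation

/-- `f` maps `C` to `C'` as far as the row states in `G` are concerned. -/
structure MapsOn (C : Computation X Y) (C' : Computation X' Y) (f : X → X') (G : Set X) :
    Prop where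
  rowInit_mem : C.rowInit ∈ G
  rowInit : C'.rowInit = f C.rowInit
  colInit : C'.colInit = C.colInit
  step : ∀ x ∈ G, ∀ y, C'.step (f x) y = (C.step x y).map f id
  bad : ∀ x ∈ G, ∀ y, C'.bad (f x) y = C.bad x y

variable {C : Computation X Y} {C' : Computation X' Y} {f : X → X'} {G : Set X}

theorem MapsOn.midLanes_map (hf : MapsOn C C' f G) (h : Signal X) (v : Signal Y) :
    C'.midLanes (h.map f) v = (C.midLanes h v).map (Lane.map f) id := by
  simp only [midLanes, Signal.midLane, hf.rowInit, hf.colInit, Prod.map, Lane.map_enter]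
  rfl

theorem MapsOn.crossing_map (hf : MapsOn C C' f G) {h : Signal X} (hh : h.lane.StateIn G)
    (v : Signal Y) :
    C'.crossing (h.map f) v = (C.crossing h v).map (Prod.map (Signal.map f) id) := by
  have hmid : (C.midLanes h v).1.StateIn G := hh.enter hf.rowInit_mem _ _
  have hout : C'.outLanes (h.map f) v = (C.outLanes h v).map (Lane.map f) id := by
    rw [outLanes, outLanes, hf.midLanes_map]
    generalize C.midLanes h v = m at hmid
    rcases m with ⟨_ | _ | x, _ | _ | y⟩ <;> try rfl
    simp [Lane.map, Lane.interact, hf.step x hmid]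
  have hclash : Lane.Clash C'.bad (C'.midLanes (h.map f) v).1 (C'.midLanes (h.map f) v).2 ↔
      Lane.Clash C.bad (C.midLanes h v).1 (C.midLanes h v).2 := by
    rw [hf.midLanes_map]
    generalize C.midLanes h v = m at hmid
    rcases m with ⟨_ | _ | x, _ | _ | y⟩ <;> try rfl
    simp [Lane.map, Lane.Clash, hf.bad x hmid]
  have hvalid : C'.Valid (h.map f) v ↔ C.Valid h v :=
    ⟨fun ⟨hr, hc, hn⟩ => ⟨⟨hr.1, hr.2, hr.3⟩, ⟨hc.1, hc.2, hc.3⟩, mt hclash.2 hn⟩,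
      fun ⟨hr, hc, hn⟩ => ⟨⟨hr.1, hr.2, hr.3⟩, ⟨hc.1, hc.2, hc.3⟩, mt hclash.1 hn⟩⟩
  have hrow : C'.rowOut (h.map f) v = (C.rowOut h v).map f := by
    rw [rowOut, hout]
    rfl
  have hcol : C'.colOut (h.map f) v = C.colOut h v := by
    rw [colOut, hout]
    rfl
  by_cases hv : C.Valid h v <;> simp [crossing, hvalid, hv, hrow, hcol]

end Computation

/-- The operation recorded in a lane; the counter of a lane that is not active is irrelevant. -/
def Lane.counterOp : Lane (P × CounterOp) → CounterOp
  | active x => x.2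
  | _ => .reset

namespace CounterProgram

/-- The computation performing the steps of a program while recording the counter operations
instead of the counter, whose test is assumed to give `b`. -/
def symbolic (S : CounterProgram P Q) (b : Bool) : Computation (P × CounterOp) Q where
  rowInit := (S.rowInit, .reset)
  colInit := S.colInit
  step x y := S.step b x.1 y
  bad x y := S.bad x.1 y

/-- The first step of every row resets the counter, without testing it. -/
def Resets (S : CounterProgram P Q) : Prop :=
  ∀ b b' y, S.step b S.rowInit y = S.step b' S.rowInit y ∧ (S.step b S.rowInit y).1.2 = .reset

/-- The crossing of a row whose counter has been split off. The argument `b` is the result of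
testing the counter. -/
noncomputable def table (S : CounterProgram P Q) (b : Bool) (h : Signal P) (v : Signal Q) :
    Option ((Signal P × Signal Q) × CounterOp) :=
  ((S.symbolic b).crossing (h.map (·, .keep)) v).map fun r =>
    ((r.1.map Prod.fst, r.2), r.1.lane.counterOp)

variable {S : CounterProgram P Q}

theorem Resets.mapsOn (hS : S.Resets) {n : ℕ} (k : Fin (n + 1)) :
    (S.symbolic (decide ((k : ℕ) < n))).MapsOn (S.run n) (fun x => (x.1, x.2.eval n k))
      {x | x.2 = .keep ∨ x = (S.rowInit, .reset)} where
  rowInit_mem := Or.inr rfl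
  rowInit := rfl
  colInit := rfl
  step := by
    rintro ⟨p, op⟩ (rfl | heq) y
    · rfl
    · cases heq
      have hbit := (hS (decide (((0 : Fin (n + 1)) : ℕ) < n)) (decide ((k : ℕ) < n)) y).1
      have hreset := (hS (decide ((k : ℕ) < n)) true y).2
      simp only [run, symbolic, CounterOp.eval, hbit, hreset, Prod.map, id]
  bad _ _ _ := rfl

theorem Resets.map_table (hS : S.Resets) {n : ℕ} (k : Fin (n + 1)) (h : Signal P) (v : Signal Q) :
    (S.table (decide ((k : ℕ) < n)) h v).map (fun r => (r.1.1.map (·, r.2.eval n k), r.1.2)) =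
      (S.run n).crossing (h.map (·, k)) v := by
  have hgood : (h.map (·, CounterOp.keep)).lane.StateIn
      {x | x.2 = .keep ∨ x = (S.rowInit, .reset)} := by
    rcases h with ⟨_, _, _, _, _, _, _ | _ | _⟩ <;> simp [Signal.map, Lane.map, Lane.StateIn]
  have hcross := (hS.mapsOn k).crossing_map hgood v
  rw [Signal.map_map] at hcross
  refine Eq.trans ?_ hcross.symm
  rw [table, Option.map_map]
  congr 1
  funext ⟨⟨_, _, _, _, _, _, s⟩, _⟩
  cases s <;> rfl

end CounterProgram

section CounterRule

variable {W : Type*}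

/-- The local rule on cells that hold, besides an element of `W`, a counter bounded by `n`. The
table `T` depends on the counter of the left cell only through the test whether it is less than
`n`. -/
def counterRule (T : Bool → W → W → Option (W × CounterOp)) (n : ℕ) (a b : Fin (n + 1) × W) :
    Option (Fin (n + 1) × W) :=
  (T (decide ((a.1 : ℕ) < n)) a.2 b.2).map fun r => (r.2.eval n a.1, r.1)

end CounterRule

theorem CounterProgram.Resets.nilpotent_counterRule_iff {S : CounterProgram P Q} (hS : S.Resets)
    (n : ℕ) :
    Nilpotent (caMap 1 (spreadRule (counterRule (fun b x y => S.table b x.1 y.2) n))) ↔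
      ¬ (S.run n).Safe := by
  rw [← Computation.nilpotent_crossing_iff]
  refine nilpotent_spreadRule_iff_of_factor
    (π := fun a => (a.2.1.map (·, a.1), a.2.2)) ?_ fun a b => ?_
  · rintro ⟨⟨d, c, s, t, gd, gs, _ | _ | x⟩, v⟩
    · exact ⟨(0, ⟨d, c, s, t, gd, gs, .blocked⟩, v), rfl⟩
    · exact ⟨(0, ⟨d, c, s, t, gd, gs, .ready⟩, v), rfl⟩
    · exact ⟨(x.2, ⟨d, c, s, t, gd, gs, .active x.1⟩, v), rfl⟩
  · rw [counterRule, Option.map_map]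
    exact hS.map_table _ _ _

theorem simulate_resets [Inhabited Γ] [Inhabited Λ] (M : TM0.Machine Γ Λ) (q₀ : Λ)
    (c₀ c₁ c₂ : Γ) : (simulate M q₀ c₀ c₁ c₂).Resets := by
  intro b b' y
  cases y <;> simp [simulate]

section Finite

instance [Finite X] : Finite (Lane X) :=
  .of_injective (β := Option (Option X))
    (fun | .blocked => none | .ready => some none | .active x => some (some x)) <| by
    rintro ⟨⟩ ⟨⟩ <;> simp

instance [Finite X] : Finite (Signal X) :=
  .of_injective (β := Fin 4 × Fin 16 × Fin 4 × Bool × Fin 4 × Fin 4 × Lane X)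
    (fun h => (h.digit, h.count, h.sample, h.tie, h.gapDigit, h.gapSample, h.lane)) <| by
    rintro ⟨⟩ ⟨⟩
    simp

instance [Finite X] : Finite (RowState X) :=
  .of_injective (β := Fin 4 ⊕ X × X)
    (fun
      | .start => .inl 0 | .second => .inl 1 | .rest => .inl 2 | .blank => .inl 3
      | .scan a b => .inr (a, b)) <| by
    rintro ⟨⟩ ⟨⟩ <;> simp

end Finite

end Table

/-! ### Encodings of local rules -/

section Encoding

theorem encode_list_map {α β : Type*} [Encodable α] [Encodable β] {f : α → β}
    (hf : ∀ a, encode (f a) = encode a) (l : List α) : encode (l.map f) = encode l := by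
  induction l with
  | nil => rfl
  | cons a l ih => rw [List.map_cons, encode_list_cons, encode_list_cons, ih, hf]

theorem encode_list_le {l l' : List ℕ} (h : List.Forall₂ (· ≤ ·) l l') : encode l ≤ encode l' := by
  induction h with
  | nil => rfl
  | cons hab _ ih =>
    rw [encode_list_cons, encode_list_cons]
    exact Nat.succ_le_succ <|
      ((StrictMono.monotone fun _ _ => Nat.pair_lt_pair_left _) hab).trans <|
        (StrictMono.monotone fun _ _ => Nat.pair_lt_pair_right _) ih

theorem encode_finPi {α : Type*} [Encodable α] {d : ℕ} (f : Fin d → α) :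
    @encode _ (finPi d fun _ => α) f =
      encode ((List.ofFn fun i => encode (f i)).mapIdx Nat.pair) := by
  have hsigma : @encode _ (finPi d fun _ => α) f =
      encode (List.Vector.ofFn fun i => (⟨i, f i⟩ : Σ _ : Fin d, α)).toList := rfl
  rw [hsigma, List.Vector.toList_ofFn,
    ← encode_list_map (f := fun x : Σ _ : Fin d, α => Nat.pair x.1 (encode x.2)) fun _ => rfl]
  congr 1
  exact List.ext_getElem (by simp) fun i _ _ => by simp

variable {α β : Type*} [Encodable α] [Fintype α]

theorem fintypeEquivFin_getElem_sortedUniv {i : ℕ} (hi : i < (sortedUniv α).length) :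
    (fintypeEquivFin (sortedUniv α)[i] : ℕ) = i := by
  have hcast : ∀ {k l : ℕ}, k = l → ∀ (h : Fin k = Fin l) (j : Fin k),
      (Equiv.cast h j : ℕ) = j := by
    rintro k _ rfl _ _
    rfl
  rw [fintypeEquivFin, Equiv.trans_apply, hcast (length_sortedUniv α)]
  let := decidableEqOfEncodable α
  exact congrArg Fin.val (Equiv.symm_apply_apply
    ((sortedUniv_nodup α).getEquivOfForallMemList _ mem_sortedUniv) ⟨i, hi⟩)

theorem encode_fintypeArrow [Encodable β] (f : α → β) :
    @encode _ fintypeArrowOfEncodable f =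
      encode (((sortedUniv α).map fun a => encode (f a)).mapIdx Nat.pair) := by
  have hfin : @encode _ fintypeArrowOfEncodable f =
      @encode _ (finPi (Fintype.card α) fun _ => β) (f ∘ fintypeEquivFin.symm) := rfl
  rw [hfin, encode_finPi]
  congr 2
  refine List.ext_getElem (by simp) fun i hi hi' => ?_
  have hsymm : fintypeEquivFin.symm ⟨i, by simpa using hi⟩ =
      (sortedUniv α)[i]'(by simpa using hi') := by
    rw [Equiv.symm_apply_eq, Fin.ext_iff, fintypeEquivFin_getElem_sortedUniv]
  simp [hsymm]

theorem sortedUniv_eq_filterMap_decode₂ {b : ℕ} (hb : ∀ a : α, encode a ≤ b) :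
    sortedUniv α = (List.range (b + 1)).filterMap (decode₂ α) := by
  have hlt : ((List.range (b + 1)).filterMap (decode₂ α)).Pairwise (encode · < encode ·) :=
    List.pairwise_lt_range.filterMap _ fun k k' hk a ha a' ha' => by
      rwa [decode₂_eq_some.1 ha, decode₂_eq_some.1 ha']
  have hle : (sortedUniv α).Pairwise (encode · ≤ encode ·) :=
    Finset.pairwise_sort _ (encode' α ⁻¹'o (· ≤ ·))
  refine List.Perm.eq_of_pairwise (fun a a' _ _ h h' => encode_injective (le_antisymm h h'))
    hle (hlt.imp le_of_lt) ?_
  refine (List.perm_ext_iff_of_nodup (sortedUniv_nodup α) (hlt.imp ?_)).2 fun a => ?_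
  · rintro a a' h rfl
    exact h.false
  · simpa [decode₂_eq_some] using Nat.lt_succ_of_le (hb a)

end Encoding

section RuleTable

variable {d : ℕ}

/-- The letters of the word over `{0, …, N}` of length `d` whose code is `k`, if there is one. -/
def wordOfCode (d N k : ℕ) : Option (List ℕ) :=
  ((decode k : Option (List ℕ)).map fun l => l.map (·.unpair.2)).bind
    (Option.guard fun l => encode (l.mapIdx Nat.pair) = k ∧ l.length = d ∧ ∀ a ∈ l, a ≤ N)

theorem wordOfCode_eq_some_iff {N k : ℕ} {l : List ℕ} :
    wordOfCode d N k = some l ↔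
      encode (l.mapIdx Nat.pair) = k ∧ l.length = d ∧ ∀ a ∈ l, a ≤ N := by
  simp only [wordOfCode, Option.bind_eq_some_iff, Option.map_eq_some_iff, Option.guard_eq_some_iff]
  constructor
  · rintro ⟨_, _, rfl, h⟩
    simpa using h
  · rintro ⟨rfl, h⟩
    have hmap : (l.mapIdx Nat.pair).map (·.unpair.2) = l :=
      List.ext_getElem (by simp) fun i _ _ => by simp
    exact ⟨l, ⟨_, encodek _, hmap⟩, rfl, by simpa using h⟩

theorem wordOfCode_eq (d N k : ℕ) :
    wordOfCode d N k =
      (decode₂ (Fin d → Fin (N + 1)) k).map fun w => List.ofFn fun i => (w i : ℕ) := by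
  ext l
  rw [wordOfCode_eq_some_iff, Option.map_eq_some_iff]
  simp only [decode₂_eq_some]
  constructor
  · rintro ⟨rfl, rfl, hl⟩
    refine ⟨fun i => ⟨l[i], Nat.lt_succ_of_le (hl _ (List.getElem_mem _))⟩, ?_, List.ofFn_getElem⟩
    rw [encode_finPi]
    exact congrArg (fun l : List ℕ => encode (l.mapIdx Nat.pair)) List.ofFn_getElem
  · rintro ⟨w, rfl, rfl⟩
    refine ⟨(encode_finPi w).symm, List.length_ofFn, ?_⟩
    simpa [List.mem_ofFn] using fun i => Nat.le_of_lt_succ (w i).2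

/-- The largest code of a word over `{0, …, N}` of length `d`. -/
def maxWordCode (d N : ℕ) : ℕ :=
  encode ((List.ofFn fun _ : Fin d => N).mapIdx Nat.pair)

theorem encode_le_maxWordCode {N : ℕ} (w : Fin d → Fin (N + 1)) :
    encode w ≤ maxWordCode d N := by
  rw [encode_finPi]
  refine encode_list_le (List.forall₂_iff_get.2 ⟨by simp, fun i hi _ => ?_⟩)
  simp only [List.get_eq_getElem, List.getElem_mapIdx, List.getElem_ofFn]
  exact StrictMono.monotone (fun _ _ => Nat.pair_lt_pair_right _) (Nat.le_of_lt_succ (w _).2)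

/-- The values of a function `F` of words over `{0, …, N}` of length `d`, in the order of the
codes of the words. -/
def ruleTable (d N : ℕ) (F : List ℕ → ℕ) : List ℕ :=
  (List.range (maxWordCode d N + 1)).filterMap fun k => (wordOfCode d N k).map F

theorem encode_rule {N : ℕ} (f : (Fin d → Fin (N + 1)) → Fin (N + 1)) (F : List ℕ → ℕ)
    (hF : ∀ w, (f w : ℕ) = F (List.ofFn fun i => (w i : ℕ))) :
    @encode _ fintypeArrowOfEncodable f = encode ((ruleTable d N F).mapIdx Nat.pair) := by
  rw [encode_fintypeArrow, ruleTable, sortedUniv_eq_filterMap_decode₂ encode_le_maxWordCode,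
    List.map_filterMap]
  congr 3
  funext k
  rw [wordOfCode_eq, Option.map_map]
  congr 1
  exact funext hF

theorem primrec_mapIdx {α β : Type*} [Primcodable α] [Inhabited α] [Primcodable β]
    {f : ℕ → α → β} (hf : Primrec₂ f) : Primrec fun l : List α => l.mapIdx f := by
  refine (Primrec.list_map (Primrec.list_range.comp Primrec.list_length) (hf.comp₂ Primrec₂.right
    ((Primrec.list_getD default).comp₂ Primrec₂.left Primrec₂.right))).of_eq fun l => ?_
  refine List.ext_getElem (by simp) fun i _ hi => ?_
  simp only [List.length_mapIdx] at hi
  simp [hi]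

theorem primrec_wordOfCode (d : ℕ) : Primrec₂ (wordOfCode d) := by
  refine Primrec.option_bind (Primrec.option_map (Primrec.decode.comp Primrec.snd) ?_) ?_
  · refine Primrec.list_map Primrec.snd ?_
    exact (Primrec.snd.comp (Primrec.unpair.comp Primrec.snd)).to₂
  · have hcode : PrimrecRel fun (p : ℕ × ℕ) (l : List ℕ) => encode (l.mapIdx Nat.pair) = p.2 :=
      Primrec.eq.comp (Primrec.encode.comp ((primrec_mapIdx Primrec₂.natPair).comp Primrec.snd))
        (Primrec.snd.comp Primrec.fst)
    have hlength : PrimrecRel fun (_ : ℕ × ℕ) (l : List ℕ) => l.length = d :=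
      Primrec.eq.comp (Primrec.list_length.comp Primrec.snd) (Primrec.const d)
    have hletters : PrimrecRel fun (p : ℕ × ℕ) (l : List ℕ) => ∀ a ∈ l, a ≤ p.1 :=
      Primrec.nat_le.forall_mem_list.comp Primrec.snd (Primrec.fst.comp Primrec.fst)
    exact Primrec.ite (by simpa only [decide_eq_true_eq] using hcode.and (hlength.and hletters))
      (Primrec.option_some.comp Primrec.snd) (Primrec.const none)

theorem primrec_ruleTable {N : ℕ → ℕ} (hN : Primrec N) {F : ℕ → List ℕ → ℕ} (hF : Primrec₂ F) :
    Primrec fun n => ruleTable d (N n) (F n) := by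
  have hmax : Primrec fun n => maxWordCode d (N n) :=
    Primrec.encode.comp ((primrec_mapIdx Primrec₂.natPair).comp (Primrec.list_ofFn fun _ => hN))
  refine Primrec.listFilterMap (Primrec.list_range.comp (Primrec.succ.comp hmax)) ?_
  refine Primrec.option_map
    ((primrec_wordOfCode d).comp₂ (hN.comp₂ Primrec₂.left) Primrec₂.right) ?_
  exact hF.comp₂ ((Primrec.fst.comp Primrec.fst).to₂) Primrec₂.right

end RuleTable

/-! ### Codes of automata -/

instance : Primcodable CounterOp :=
  .ofEquiv (Fin 3)
    { toFun := fun | .keep => 0 | .reset => 1 | .increment => 2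
      invFun := ![.keep, .reset, .increment]
      left_inv := by rintro ⟨⟩ <;> rfl
      right_inv := by decide }

/-- The operation `CounterOp.eval` on numbers. -/
def CounterOp.natEval (n : ℕ) : CounterOp → ℕ → ℕ
  | keep, k => k
  | reset, _ => 0
  | increment, k => min (k + 1) n

theorem CounterOp.val_eval (n : ℕ) (op : CounterOp) (k : Fin (n + 1)) :
    (op.eval n k : ℕ) = op.natEval n k := by
  cases op <;> rfl

theorem CounterOp.primrec_natEval :
    Primrec fun p : ℕ × CounterOp × ℕ => p.2.1.natEval p.1 p.2.2 := by
  classical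
  have hop : Primrec fun p : ℕ × CounterOp × ℕ => p.2.1 := Primrec.fst.comp Primrec.snd
  have hk : Primrec fun p : ℕ × CounterOp × ℕ => p.2.2 := Primrec.snd.comp Primrec.snd
  refine (Primrec.ite (Primrec.eq.comp hop (.const .keep)) hk
    (Primrec.ite (Primrec.eq.comp hop (.const .reset)) (.const 0)
      (Primrec.nat_min.comp (Primrec.succ.comp hk) Primrec.fst))).of_eq ?_
  rintro ⟨n, _ | _ | _, k⟩ <;> simp [natEval]

section NumericRule

variable {m : ℕ} (T : Bool → Fin m → Fin m → Option (Fin m × CounterOp)) (n : ℕ)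

/-- The rule `counterRule` with unbounded counters. -/
def natCounterRule (a b : ℕ × Fin m) : Option (ℕ × Fin m) :=
  (T (decide (a.1 < n)) a.2 b.2).map fun r => (r.2.natEval n a.1, r.1)

theorem primrec_natCounterRule :
    Primrec fun p : ℕ × (ℕ × Fin m) × (ℕ × Fin m) => natCounterRule T p.1 p.2.1 p.2.2 := by
  have htable : Primrec fun p : Bool × Fin m × Fin m => T p.1 p.2.1 p.2.2 := Primrec.dom_finite _
  have hcounter : Primrec fun p : ℕ × (ℕ × Fin m) × (ℕ × Fin m) => p.2.1.1 :=
    Primrec.fst.comp (Primrec.fst.comp .snd)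
  refine Primrec.option_map (htable.comp (Primrec.pair (Primrec.nat_lt.comp hcounter .fst).decide
    (Primrec.pair (Primrec.snd.comp (Primrec.fst.comp .snd))
      (Primrec.snd.comp (Primrec.snd.comp .snd))))) ?_
  exact Primrec.pair (CounterOp.primrec_natEval.comp (Primrec.pair (Primrec.fst.comp .fst)
    (Primrec.pair (Primrec.snd.comp .snd) (hcounter.comp .fst)))) (Primrec.fst.comp .snd)

theorem map_counterRule (a b : Fin (n + 1) × Fin m) :
    (counterRule T n a b).map (Prod.map Fin.val id) =
      natCounterRule T n (a.map Fin.val id) (b.map Fin.val id) := by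
  simp only [counterRule, natCounterRule, Option.map_map, Function.comp_def, Prod.map,
    CounterOp.val_eval, id]

/-- Cells, consisting of a counter bounded by `n` and an element of `Fin m`, are numbered from `1`
on; the number `0` is that of the spreading state. -/
def boundedCellEquiv (n m : ℕ) : Option (Fin (n + 1) × Fin m) ≃ Fin ((n + 1) * m + 1) :=
  finProdFinEquiv.optionCongr.trans (finSuccEquiv _).symm

/-- The local rule `spreadRule (counterRule T n)` on numbered cells. -/
def numericRule (u : Fin (2 * 1 + 1) → Fin ((n + 1) * m + 1)) : Fin ((n + 1) * m + 1) :=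
  boundedCellEquiv n m (spreadRule (counterRule T n) ((boundedCellEquiv n m).symm ∘ u))

theorem boundedCellEquiv_spreadRule (u : Fin (2 * 1 + 1) → Option (Fin (n + 1) × Fin m)) :
    boundedCellEquiv n m (spreadRule (counterRule T n) u) =
      numericRule T n (boundedCellEquiv n m ∘ u) := by
  rw [numericRule, ← Function.comp_assoc, Equiv.symm_comp_self, Function.id_comp]

theorem spreadingRule_numericRule : SpreadingRule (numericRule T n) 0 :=
  (spreadingRule_spreadRule _).of_factor (boundedCellEquiv n m).surjective
    (boundedCellEquiv_spreadRule T n) fun _ h => (boundedCellEquiv n m).injective h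

theorem nilpotent_numericRule_iff :
    Nilpotent (caMap 1 (numericRule T n)) ↔ Nilpotent (caMap 1 (spreadRule (counterRule T n))) :=
  ((spreadingRule_spreadRule _).nilpotent_iff_of_factor (boundedCellEquiv n m).surjective
    (boundedCellEquiv_spreadRule T n) fun _ h => (boundedCellEquiv n m).injective h).symm

end NumericRule

section Code

variable {m : ℕ} [NeZero m] (T : Bool → Fin m → Fin m → Option (Fin m × CounterOp)) (n : ℕ)

/-- The extension of `boundedCellEquiv` to cells with an unbounded counter. -/
def cellEquiv (m : ℕ) [NeZero m] : Option (ℕ × Fin m) ≃ ℕ :=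
  (Nat.divModEquiv m).symm.optionCongr.trans (Denumerable.eqv _)

theorem val_boundedCellEquiv (c : Option (Fin (n + 1) × Fin m)) :
    (boundedCellEquiv n m c : ℕ) = cellEquiv m (c.map (Prod.map Fin.val id)) := by
  cases c with
  | none => rfl
  | some a =>
    change (a.2 : ℕ) + m * a.1 + 1 = (a.1 : ℕ) * m + a.2 + 1
    ring

/-- The values of `numericRule T n` as a function of the letters of a word. -/
def natRule (l : List ℕ) : ℕ :=
  cellEquiv m (spreadRule (natCounterRule T n) fun i => (cellEquiv m).symm (l.getD i 0))

theorem val_numericRule (u : Fin (2 * 1 + 1) → Fin ((n + 1) * m + 1)) :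
    (numericRule T n u : ℕ) = natRule T n (List.ofFn fun i => (u i : ℕ)) := by
  rw [numericRule, val_boundedCellEquiv, map_spreadRule (map_counterRule T n), natRule]
  congr 2
  funext i
  rw [Function.comp_apply, Function.comp_apply, Equiv.eq_symm_apply, ← val_boundedCellEquiv,
    Equiv.apply_symm_apply, List.getD_eq_getElem _ _ (by simp), List.getElem_ofFn]

theorem primrec_cellEquiv : Primrec (cellEquiv m) := by
  refine Primrec.encode.comp (Primrec.option_map .id ?_)
  refine (Primrec.nat_add.comp (Primrec.nat_mul.comp (Primrec.fst.comp .snd) (.const m))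
    (Primrec.fin_val.comp (Primrec.snd.comp .snd))).to₂

theorem primrec_cellEquiv_symm : Primrec (cellEquiv m).symm := by
  refine Primrec.option_map (Primrec.ofNat (Option ℕ)) (Primrec.pair ?_ ?_)
  · exact Primrec.nat_div.comp .snd (.const m)
  · exact Primrec.fin_val_iff.1 (Primrec.nat_mod.comp .snd (.const m))

theorem primrec_natRule : Primrec₂ (natRule T) := by
  have hcell (i : ℕ) : Primrec fun l : List ℕ => (cellEquiv m).symm (l.getD i 0) :=
    primrec_cellEquiv_symm.comp ((Primrec.list_getD 0).comp .id (.const i))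
  refine primrec_cellEquiv.comp ?_
  refine Primrec.option_bind ((hcell 0).comp .snd) ?_
  refine Primrec.option_bind ((hcell 1).comp (Primrec.snd.comp .fst)) ?_
  refine Primrec.option_bind ((hcell 2).comp (Primrec.snd.comp (Primrec.fst.comp .fst))) ?_
  exact (primrec_natCounterRule T).comp (Primrec.pair
    (Primrec.fst.comp (Primrec.fst.comp (Primrec.fst.comp .fst)))
    (Primrec.pair (Primrec.snd.comp (Primrec.fst.comp .fst)) (Primrec.snd.comp .fst)))

/-- The code of the automaton with local rule `numericRule T n`. -/
def code : NilCode := ⟨(n + 1) * m, 1, numericRule T n, 0⟩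

theorem primrec_encode_code : Primrec fun n => encode (code T n) := by
  have hcode (n : ℕ) : encode (code T n) = Nat.pair ((n + 1) * m) (Nat.pair 1
      (Nat.pair (encode ((ruleTable (2 * 1 + 1) ((n + 1) * m) (natRule T n)).mapIdx Nat.pair))
        0)) := by
    rw [code, encode_sigma_val, encode_sigma_val, encode_prod_val,
      encode_rule _ _ (val_numericRule T n)]
    rfl
  have hletters : Primrec fun n => (n + 1) * m := Primrec.nat_mul.comp .succ (.const m)
  refine (Primrec₂.natPair.comp hletters <| Primrec₂.natPair.comp (.const 1) <|
    Primrec₂.natPair.comp (Primrec.encode.comp <| (primrec_mapIdx Primrec₂.natPair).comp <|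
      primrec_ruleTable hletters (primrec_natRule T)) (.const 0)).of_eq fun n => (hcode n).symm

end Code

section Transport

variable {W W' : Type*} (e : W ≃ W') (T : Bool → W → W → Option (W × CounterOp)) (n : ℕ)

/-- The table `T` with the letters renamed by `e`. -/
def renameTable (b : Bool) (x y : W') : Option (W' × CounterOp) :=
  (T b (e.symm x) (e.symm y)).map (Prod.map e id)

theorem nilpotent_counterRule_renameTable_iff :
    Nilpotent (caMap 1 (spreadRule (counterRule (renameTable e T) n))) ↔
      Nilpotent (caMap 1 (spreadRule (counterRule T n))) := by
  refine (nilpotent_spreadRule_iff_of_factor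
    (((Equiv.refl _).prodCongr e).surjective) fun a b => ?_).symm
  simp only [counterRule, renameTable, Option.map_map, Equiv.prodCongr_apply, Prod.map_fst,
    Prod.map_snd, Equiv.coe_refl, id_eq, Equiv.symm_apply_apply]
  rfl

end Transport

theorem exists_primrec_code_counterRule {W : Type*} [Finite W] [Nonempty W]
    (T : Bool → W → W → Option (W × CounterOp)) :
    ∃ c : ℕ → NilCode, (Primrec fun n => encode (c n)) ∧
      ∀ n, SpreadingRule (c n).2.2.1 (c n).2.2.2 ∧
        (Nilpotent (caMap (c n).2.1 (c n).2.2.1) ↔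
          Nilpotent (caMap 1 (spreadRule (counterRule T n)))) := by
  obtain ⟨m, ⟨e⟩⟩ := Finite.exists_equiv_fin W
  have : NeZero m := .of_pos (Fin.pos (e (Classical.arbitrary W)))
  exact ⟨code (renameTable e T), primrec_encode_code _, fun n => ⟨spreadingRule_numericRule _ n,
    (nilpotent_numericRule_iff _ n).trans (nilpotent_counterRule_renameTable_iff e T n)⟩⟩

theorem exists_primrec_code_eval {Γ Λ : Type*} [Inhabited Γ] [Inhabited Λ] [Finite Γ] [Finite Λ]
    (M : TM0.Machine Γ Λ) (q₀ : Λ) (c₀ c₁ c₂ : Γ) :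
    ∃ c : ℕ → NilCode, (Primrec fun n => encode (c n)) ∧
      ∀ n, SpreadingRule (c n).2.2.1 (c n).2.2.2 ∧
        (Nilpotent (caMap (c n).2.1 (c n).2.2.1) ↔
          (StateTransition.eval (TM0.step M) (initCfg q₀ c₀ c₁ c₂ n)).Dom) := by
  have : Nonempty (Signal (RowState (TapeCell Γ Λ)) × Signal (Option (TapeCell Γ Λ))) :=
    ⟨⟨0, 0, 0, true, 0, 0, .blocked⟩, ⟨0, 0, 0, true, 0, 0, .blocked⟩⟩
  obtain ⟨c, hc, hcode⟩ := exists_primrec_code_counterRule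
    fun b x y => (simulate M q₀ c₀ c₁ c₂).table b x.1 y.2
  refine ⟨c, hc, fun n => ⟨(hcode n).1, (hcode n).2.trans ?_⟩⟩
  rw [(simulate_resets M q₀ c₀ c₁ c₂).nilpotent_counterRule_iff, eval_dom_iff_not_safe]

end SignalGrid

/-- The nilpotency problem for cellular automata with a spreading state is
undecidable: no computable predicate decides, among the codes `(n, r, f, θ)` such
that `θ` is spreading, whether the coded cellular automaton is nilpotent. -/
theorem nilpotency_spreading_undecidable :
    ¬ ∃ g : ℕ → Bool, Computable g ∧
        ∀ c : NilCode, SpreadingRule c.2.2.1 c.2.2.2 →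
          (g (Encodable.encode c) = true ↔ Nilpotent (caMap c.2.1 c.2.2.1)) := by
  rintro ⟨g, hg, hdecides⟩
  obtain ⟨Γ, Λ, _, _, _, _, M, q₀, c₀, c₁, c₂, hundecidable⟩ :=
    SignalGrid.exists_machine_not_computablePred_eval
  obtain ⟨c, hc, hcode⟩ := SignalGrid.exists_primrec_code_eval M q₀ c₀ c₁ c₂
  refine hundecidable (ComputablePred.computable_iff.2 ⟨_, hg.comp hc.to_comp, ?_⟩)
  funext n
  exact propext ((hcode n).2.symm.trans (hdecides (c n) (hcode n).1).symm)
end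

section
/- Let N be a cellular automaton on a finite alphabet A admitting a spreading state θ ∈ A. Then N is nilpotent if and only if for every configuration x ∈ A^ℤ there exist i ∈ ℤ and j ∈ ℕ such that N^j(x)_i = θ. -/
/-!
The spreading state `θ` propagates at speed `r`, so a `θ` at position `i` reaches the origin within
`|i|` further steps and stays there, provided `r ≥ 1`. If `θ` appears in the orbit of every
configuration, compactness bounds its space-time position `(i, j)` uniformly, hence also the time at
which the origin is in state `θ`; translation invariance transfers this to all cells.
For `r = 0` nothing propagates, but cells do not interact either, so one looks at constant
configurations instead of translates: both amount to composing with a map `ℤ → ℤ` that is a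
translation on every window of radius `r`.
-/

open Function Set
open scoped Pointwise

theorem exists_forall_exists_le_of_isOpen_cover {X ι α : Type*} [TopologicalSpace X]
    [CompactSpace X] [Preorder α] [IsDirectedOrder α] [Nonempty α] {U : ι → Set X}
    (hU : ∀ i, IsOpen (U i)) (hcover : ∀ x, ∃ i, x ∈ U i) (b : ι → α) :
    ∃ M, ∀ x, ∃ i, b i ≤ M ∧ x ∈ U i := by
  classical
  obtain ⟨t, ht⟩ := isCompact_univ.elim_finite_subcover U hU fun x _ ↦ mem_iUnion.2 (hcover x)
  obtain ⟨M, hM⟩ := (t.image b).exists_le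
  refine ⟨M, fun x ↦ ?_⟩
  obtain ⟨i, hi, hx⟩ := mem_iUnion₂.1 (ht (mem_univ x))
  exact ⟨i, hM _ (Finset.mem_image_of_mem b hi), hx⟩

theorem exists_forall_exists_iterate_mem_of_continuous {B : Type*} [TopologicalSpace B]
    [CompactSpace B] {F : Config B → Config B} (hF : Continuous F) {U : Set B} (hU : IsOpen U)
    (h : ∀ x, ∃ i j, F^[j] x i ∈ U) :
    ∃ M, ∀ x, ∃ (i : ℤ) (j : ℕ), i.natAbs + j ≤ M ∧ F^[j] x i ∈ U := by
  have hopen (ij : ℤ × ℕ) : IsOpen ((fun x ↦ F^[ij.2] x ij.1) ⁻¹' U) :=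
    hU.preimage ((continuous_apply ij.1).comp (hF.iterate ij.2))
  simpa only [Prod.exists, mem_preimage] using exists_forall_exists_le_of_isOpen_cover hopen
    (fun x ↦ Prod.exists.2 (h x)) fun ij ↦ ij.1.natAbs + ij.2

theorem exists_abs_sub_le_and_abs_sub_le {G : Type*} [AddCommGroup G] [LinearOrder G]
    [IsOrderedAddMonoid G] {a b p q : G} (ha : 0 ≤ a) (hb : 0 ≤ b) (h : |q - p| ≤ a + b) :
    ∃ s, |q - s| ≤ a ∧ |s - p| ≤ b := by
  have hmem : q - p ∈ Icc (-a) a + Icc (-b) b := by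
    rw [Icc_add_Icc (neg_le_self ha) (neg_le_self hb), ← neg_add]
    exact abs_le.1 h
  obtain ⟨c, hc, d, hd, hcd : c + d = q - p⟩ := hmem
  refine ⟨p + d, abs_le.2 ?_, abs_le.2 ?_⟩
  · rwa [← sub_sub, ← hcd, add_sub_cancel_right]
  · rwa [add_sub_cancel_left]

theorem nilpotent_iff_of_isFixedPt {B : Type*} {F : Config B → Config B} {c : Config B}
    (hc : IsFixedPt F c) : Nilpotent F ↔ ∃ J, ∀ x, F^[J] x = c := by
  have : Nonempty (Config B) := ⟨c⟩
  simp only [Nilpotent, range_eq_singleton_iff]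
  refine exists_congr fun J ↦ ⟨fun ⟨d, hd⟩ x ↦ ?_, fun h ↦ ⟨c, h⟩⟩
  rw [hd x, ← hd c, hc.iterate J]

/-- A map `ℤ → ℤ` that restricts to a translation on every window of radius `r`. Reindexing
configurations along such a map commutes with every cellular automaton of radius `r`. -/
def IsLocalTranslation (r : ℕ) (φ : ℤ → ℤ) : Prop :=
  ∀ i k : ℤ, |k| ≤ r → φ (i + k) = φ i + k

theorem exists_isLocalTranslation_abs_sub_le (r : ℕ) (p : ℤ) :
    ∃ φ, IsLocalTranslation r φ ∧ ∀ i, |φ i - p| ≤ |i| * r := by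
  obtain rfl | hr := r.eq_zero_or_pos
  · refine ⟨fun _ ↦ p, fun i k hk ↦ ?_, fun i ↦ by simp⟩
    obtain rfl : k = 0 := abs_nonpos_iff.1 (by exact_mod_cast hk)
    simp only [add_zero]
  · refine ⟨fun i ↦ i + p, fun i k _ ↦ add_right_comm i k p, fun i ↦ ?_⟩
    rw [add_sub_cancel_right]
    exact le_mul_of_one_le_right (abs_nonneg i) (by exact_mod_cast hr)

section CellularAutomaton

variable {B : Type*} {r : ℕ} {f : (Fin (2 * r + 1) → B) → B}

theorem continuous_caMap [TopologicalSpace B] (hf : Continuous f) : Continuous (caMap r f) :=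
  continuous_pi fun _ ↦ hf.comp (continuous_pi fun _ ↦ continuous_apply _)

theorem IsLocalTranslation.semiconj_caMap {φ : ℤ → ℤ} (hφ : IsLocalTranslation r φ) :
    Semiconj (· ∘ φ) (caMap r f) (caMap r f) := by
  refine fun x ↦ funext fun i ↦ congrArg f (funext fun j ↦ congrArg x ?_)
  have hj : |(j : ℤ) - r| ≤ r := abs_le.2 (by omega)
  calc φ i - r + j = φ i + (j - r) := by ring
    _ = φ (i + (j - r)) := (hφ i _ hj).symm
    _ = φ (i - r + j) := by congr 1; ring

namespace SpreadingRule

variable {θ : B} (hθ : SpreadingRule f θ)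

include hθ

theorem isFixedPt_caMap_const : IsFixedPt (caMap r f) (fun _ ↦ θ) :=
  funext fun _ ↦ hθ _ ⟨0, rfl⟩

theorem caMap_apply_eq {x : Config B} {p q : ℤ} (hx : x q = θ) (hqp : |q - p| ≤ r) :
    caMap r f x p = θ := by
  have hwindow := abs_le.1 hqp
  refine hθ _ ⟨⟨(q - (p - r)).toNat, by omega⟩, ?_⟩
  rwa [Int.toNat_of_nonneg (by omega), add_sub_cancel]

theorem iterate_caMap_apply_eq {x : Config B} {p q : ℤ} {n : ℕ} (hx : x q = θ)
    (hqp : |q - p| ≤ n * r) : (caMap r f)^[n] x p = θ := by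
  induction n generalizing p with
  | zero =>
    have hq : q = p := sub_eq_zero.1 (abs_nonpos_iff.1 (by simpa using hqp))
    exact hq ▸ hx
  | succ n ih =>
    rw [Nat.cast_succ, add_one_mul] at hqp
    obtain ⟨s, hqs, hsp⟩ := exists_abs_sub_le_and_abs_sub_le (by positivity) (by positivity) hqp
    rw [iterate_succ_apply']
    exact hθ.caMap_apply_eq (ih hqs) hsp

theorem iterate_caMap_eq_const {M : ℕ}
    (hM : ∀ x, ∃ (i : ℤ) (j : ℕ), i.natAbs + j ≤ M ∧ (caMap r f)^[j] x i = θ) (x : Config B) :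
    (caMap r f)^[M] x = fun _ ↦ θ := by
  funext p
  obtain ⟨φ, hφ, hφp⟩ := exists_isLocalTranslation_abs_sub_le r p
  obtain ⟨i, j, hij, hx⟩ := hM (x ∘ φ)
  have hxφ : (caMap r f)^[j] x (φ i) = θ := by
    rwa [← hφ.semiconj_caMap.iterate_right j x] at hx
  have hreach : |φ i - p| ≤ (M - j : ℕ) * r :=
    (hφp i).trans (mul_le_mul_of_nonneg_right (by rw [Int.abs_eq_natAbs]; omega) (by positivity))
  rw [← Nat.sub_add_cancel (show j ≤ M by omega), iterate_add_apply]
  exact hθ.iterate_caMap_apply_eq hxφ hreach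

end SpreadingRule

end CellularAutomaton

/-- A cellular automaton `N` on a finite alphabet with a spreading state `θ` is
nilpotent iff in the orbit of every configuration the state `θ` eventually appears
somewhere. -/
theorem nilpotent_iff_spreading_state_appears (A : Type*) [Fintype A]
    (r : ℕ) (f : (Fin (2 * r + 1) → A) → A) (θ : A) (hθ : SpreadingRule f θ) :
    Nilpotent (caMap r f) ↔
      ∀ x : Config A, ∃ (i : ℤ) (j : ℕ), (caMap r f)^[j] x i = θ := by
  rw [nilpotent_iff_of_isFixedPt hθ.isFixedPt_caMap_const]
  constructor
  · rintro ⟨J, hJ⟩ x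
    exact ⟨0, J, congrFun (hJ x) 0⟩
  · intro h
    let _ : TopologicalSpace A := ⊥
    have : DiscreteTopology A := ⟨rfl⟩
    obtain ⟨M, hM⟩ := exists_forall_exists_iterate_mem_of_continuous
      (continuous_caMap (f := f) continuous_of_discreteTopology) (isOpen_discrete {θ}) h
    exact ⟨M, hθ.iterate_caMap_eq_const hM⟩
end
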